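/- arXiv:2403.17955 — 2 statements merged into one kernel-verified Lean document; each statement's English description precedes it below -/
import Mathlib

section
/- Let $m_0$ be a nonzero integer and let $r \geq 1$. Suppose the elliptic curve $E' : Y^2 = X^3 - 432 m_0^2$ over $\mathbb{Q}$ has Mordell–Weil rank at least $r$, in the sense that there exists an injective group homomorphism from $\mathbb{Z}^r$ into the group of rational points of $E'$. Then there exists a constant $c > 0$ such that for every real number $B$ there exists an integer $m$ with $|m| > B$ and $N_f(m) > c \cdot (\log |m|)^{r/(r+2)}$. -/
/-- `N_f(m)`: the number of pairs `(x, y) ∈ ℤ²` with `x³ + y³ = m`. -/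
noncomputable def Nf (m : ℤ) : ℕ :=
  Set.ncard {p : ℤ × ℤ | p.1 ^ 3 + p.2 ^ 3 = m}

/-- The Weierstrass curve `Y² = X³ - 432 m₀²` over `ℚ`. -/
def Eprime (m0 : ℤ) : WeierstrassCurve.Affine ℚ :=
  { a₁ := 0, a₂ := 0, a₃ := 0, a₄ := 0, a₆ := -432 * (m0 : ℚ) ^ 2 }

section Aux

open WeierstrassCurve WeierstrassCurve.Affine Height

theorem addSub_some_ne (m0 : ℤ) {x1 y1 x2 y2 : ℚ} (h1 : (Eprime m0).Nonsingular x1 y1)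
    (h2 : (Eprime m0).Nonsingular x2 y2) (hx : x1 ≠ x2) :
    ∃ c : ℚ, c ≠ 0 ∧ (fun i ↦ (addSubMap (Eprime m0) i).eval
      ((Point.some x1 y1 h1).sym2x (Point.some x2 y2 h2))) =
      c • (Point.some x1 y1 h1 + Point.some x2 y2 h2).sym2x
        (Point.some x1 y1 h1 - Point.some x2 y2 h2) := by
  have hd : x1 - x2 ≠ 0 := sub_ne_zero.mpr hx
  refine ⟨(x1 - x2) ^ 2, pow_ne_zero _ hd, ?_⟩
  have e1 := (equation_iff _ _).mp h1.1
  have e2 := (equation_iff _ _).mp h2.1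
  rw [sub_eq_add_neg (Point.some x1 y1 h1), Point.neg_some, Point.add_of_X_ne hx, Point.add_of_X_ne hx,
    Point.sym2x_some_some, Point.sym2x_some_some, slope_of_X_ne hx, slope_of_X_ne hx]
  simp only [Eprime, addX, negY] at e1 e2 ⊢
  ext i
  fin_cases i
  · simp [addSubMap, WeierstrassCurve.b₂, WeierstrassCurve.b₄, WeierstrassCurve.b₆,
      WeierstrassCurve.b₈]
    field_simp
    have f1 : y1 ^ 2 = x1 ^ 3 - 432 * (m0 : ℚ) ^ 2 := by linarith
    have f2 : y2 ^ 2 = x2 ^ 3 - 432 * (m0 : ℚ) ^ 2 := by linarith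
    grind
  · simp [addSubMap, WeierstrassCurve.b₂, WeierstrassCurve.b₄, WeierstrassCurve.b₆,
      WeierstrassCurve.b₈]
    field_simp
    have f1 : y1 ^ 2 = x1 ^ 3 - 432 * (m0 : ℚ) ^ 2 := by linarith
    have f2 : y2 ^ 2 = x2 ^ 3 - 432 * (m0 : ℚ) ^ 2 := by linarith
    grind
  · simp [addSubMap]
    ring

theorem addSub_self (m0 : ℤ) (P : (Eprime m0).Point) :
    ∃ c : ℚ, c ≠ 0 ∧ (fun i ↦ (addSubMap (Eprime m0) i).eval (P.sym2x P)) =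
      c • (P + P).sym2x (P - P) := by
  rw [sub_self]
  rcases P with _ | ⟨x, y, h⟩
  · refine ⟨1, one_ne_zero, ?_⟩
    rw [← Point.zero_def, add_zero, Point.sym2x_zero_zero]
    ext i
    fin_cases i <;> simp [addSubMap]
  · have e := (equation_iff _ _).mp h.1
    by_cases hy : y = 0
    · refine ⟨(3 * x ^ 2) ^ 2, ?_, ?_⟩
      · have := (nonsingular_iff _ _).mp h
        simp [Eprime, hy] at this
        simpa using this.2
      · rw [Point.add_self_of_Y_eq (by simp [negY, Eprime, hy]), Point.sym2x_zero_zero,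
          Point.sym2x_some_some]
        simp [Eprime, hy] at e
        have f : 432 * (m0 : ℚ) ^ 2 = x ^ 3 := by linarith
        ext i
        fin_cases i
        · simp [addSubMap, Eprime, WeierstrassCurve.b₂, WeierstrassCurve.b₄, WeierstrassCurve.b₆,
            WeierstrassCurve.b₈]
          grind
        · simp [addSubMap, Eprime, WeierstrassCurve.b₂, WeierstrassCurve.b₄, WeierstrassCurve.b₆,
            WeierstrassCurve.b₈]
          grind
        · simp [addSubMap, Eprime]
          ring
    · refine ⟨4 * y ^ 2, by positivity, ?_⟩
      have hy' : y ≠ (Eprime m0).negY x y := by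
        simp [negY, Eprime]
        intro hh
        apply hy
        linarith
      rw [Point.add_self_of_Y_ne hy', Point.sym2x_some_some, Point.sym2x_some_zero,
        slope_of_Y_ne rfl hy']
      simp only [Eprime, addX, negY] at e ⊢
      have f : y ^ 2 = x ^ 3 - 432 * (m0 : ℚ) ^ 2 := by linarith
      have hyy : y - (-y - 0 * x - 0) = 2 * y := by ring
      rw [hyy]
      ext i
      fin_cases i
      · simp [addSubMap, WeierstrassCurve.b₂, WeierstrassCurve.b₄, WeierstrassCurve.b₆,
          WeierstrassCurve.b₈]
        field_simp
        grind
      · simp [addSubMap, WeierstrassCurve.b₂, WeierstrassCurve.b₄, WeierstrassCurve.b₆,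
          WeierstrassCurve.b₈]
        grind
      · simp [addSubMap]
        ring

theorem addSub_all (m0 : ℤ) (P Q : (Eprime m0).Point) :
    ∃ c : ℚ, c ≠ 0 ∧ (fun i ↦ (addSubMap (Eprime m0) i).eval (P.sym2x Q)) =
      c • (P + Q).sym2x (P - Q) := by
  by_cases hPQ : P.xRep = Q.xRep
  · rcases Point.eq_or_eq_neg_of_xRep_eq_xRep hPQ with rfl | rfl
    · exact addSub_self m0 P
    · have := addSub_self m0 Q
      rw [Point.sym2x_neg_left, Point.sym2x_comm (-Q + Q), neg_add_cancel, ← neg_add',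
        Point.sym2x_neg_left]
      simpa using this
  · rcases P with _ | ⟨x1, y1, h1⟩
    · rcases Q with _ | ⟨x2, y2, h2⟩
      · exact absurd rfl hPQ
      · refine ⟨1, one_ne_zero, ?_⟩
        rw [← Point.zero_def, zero_add, zero_sub, Point.sym2x_neg_right, Point.sym2x_zero_some,
          Point.sym2x_some_some]
        ext i
        fin_cases i <;> simp [addSubMap] <;> ring
    · rcases Q with _ | ⟨x2, y2, h2⟩
      · refine ⟨1, one_ne_zero, ?_⟩
        rw [← Point.zero_def, add_zero, sub_zero, Point.sym2x_some_zero,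
          Point.sym2x_some_some]
        ext i
        fin_cases i <;> simp [addSubMap] <;> ring
      · apply addSub_some_ne
        intro hx
        apply hPQ
        simp [hx]

/-- naive height -/
noncomputable def hgt (m0 : ℤ) (P : (Eprime m0).Point) : ℝ := logHeight P.xRep

theorem hgt_nonneg (m0 : ℤ) (P : (Eprime m0).Point) : 0 ≤ hgt m0 P := logHeight_nonneg _

theorem xRep_eta (m0 : ℤ) (P : (Eprime m0).Point) : ![P.xRep 0, P.xRep 1] = P.xRep := by
  ext i
  fin_cases i <;> rfl

theorem hgt_par (m0 : ℤ) : ∃ C : ℝ, 0 ≤ C ∧ ∀ P Q : (Eprime m0).Point,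
    hgt m0 (P + Q) + hgt m0 (P - Q) ≤ 2 * hgt m0 P + 2 * hgt m0 Q + C := by
  obtain ⟨C1, hC1⟩ := logHeight_sym2_le ℚ
  obtain ⟨C2, hC2⟩ := logHeight_sym2_ge ℚ
  obtain ⟨C3, hC3⟩ := logHeight_eval_le' (isHomogeneous_addSubMap (Eprime m0))
  refine ⟨max 0 (2 * C1 - C2 + C3), le_max_left _ _, fun P Q ↦ ?_⟩
  obtain ⟨c, hc, h⟩ := addSub_all m0 P Q
  have h3 := hC3 (P.sym2x Q)
  rw [h, logHeight_smul_eq_logHeight _ hc] at h3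
  have h1 := hC1 (P.xRep 0) (P.xRep 1) (Q.xRep 0) (Q.xRep 1)
  have h2 := hC2 (a := (P + Q).xRep 0) (b := (P + Q).xRep 1) (c := (P - Q).xRep 0)
    (d := (P - Q).xRep 1) (by rw [xRep_eta]; exact Point.xRep_ne_zero _)
    (by rw [xRep_eta]; exact Point.xRep_ne_zero _)
  rw [xRep_eta, xRep_eta] at h1 h2
  have h4 := le_max_right 0 (2 * C1 - C2 + C3)
  simp only [hgt]
  simp only [Point.sym2x] at h3
  push_cast at h3
  linarith

theorem hgt_neg (m0 : ℤ) (P : (Eprime m0).Point) : hgt m0 (-P) = hgt m0 P := by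
  simp [hgt]

theorem hgt_zero (m0 : ℤ) : hgt m0 0 = 0 := by
  rw [hgt, Point.xRep_zero, logHeight_swap]
  have := logHeight₁_eq_logHeight (0 : ℚ)
  rw [← this, logHeight₁_zero]

theorem hgt_nsmul (m0 : ℤ) (P : (Eprime m0).Point) : ∃ D : ℝ, 0 ≤ D ∧ ∀ n : ℕ,
    hgt m0 (n • P) ≤ D * n ^ 2 := by
  obtain ⟨C, hC, hp⟩ := hgt_par m0
  have h0 := hgt_nonneg m0 P
  refine ⟨2 * hgt m0 P + C, by positivity, ?_⟩
  have key : ∀ n : ℕ, hgt m0 ((n + 1) • P) - hgt m0 (n • P) ≤ (n + 1) * (2 * hgt m0 P + C) := by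
    intro n
    induction n with
    | zero => simp [hgt_zero]; linarith
    | succ n ih =>
      have := hp ((n + 1) • P) P
      rw [← succ_nsmul, show (n + 1) • P - P = n • P by rw [succ_nsmul]; abel] at this
      push_cast
      linarith
  have key2 : ∀ n : ℕ, hgt m0 (n • P) ≤ (2 * hgt m0 P + C) * (n * (n + 1) / 2) := by
    intro n
    induction n with
    | zero => simp [hgt_zero]
    | succ n ih =>
      have := key n
      push_cast
      linarith
  intro n
  refine (key2 n).trans ?_
  have hD : 0 ≤ 2 * hgt m0 P + C := by positivity
  apply mul_le_mul_of_nonneg_left _ hD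
  rcases Nat.eq_zero_or_pos n with rfl | hn
  · simp
  · have : (1 : ℝ) ≤ n := by exact_mod_cast hn
    nlinarith

theorem hgt_sum (m0 : ℤ) {ι : Type*} (s : Finset ι) (P : ι → (Eprime m0).Point) :
    ∃ K : ℝ, 0 ≤ K ∧ ∀ N : ℕ, 1 ≤ N → ∀ v : ι → ℕ, (∀ i, v i ≤ N) →
      hgt m0 (∑ i ∈ s, v i • P i) ≤ K * N ^ 2 := by
  classical
  obtain ⟨C, hC, hp⟩ := hgt_par m0
  induction s using Finset.induction with
  | empty => exact ⟨0, le_rfl, fun N _ v _ ↦ by simp [hgt_zero]⟩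
  | insert a s ha ih =>
    obtain ⟨K, hK, ih⟩ := ih
    obtain ⟨D, hD, hD2⟩ := hgt_nsmul m0 (P a)
    refine ⟨2 * D + 2 * K + C, by positivity, fun N hN v hv ↦ ?_⟩
    rw [Finset.sum_insert ha]
    have h1 := hp (v a • P a) (∑ i ∈ s, v i • P i)
    have h2 := hgt_nonneg m0 (v a • P a - ∑ i ∈ s, v i • P i)
    have h3 := ih N hN v hv
    have h4 := hD2 (v a)
    have h5 : D * (v a : ℝ) ^ 2 ≤ D * (N : ℝ) ^ 2 := by
      have : (v a : ℝ) ≤ N := by exact_mod_cast hv a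
      gcongr
    have h6 : (1 : ℝ) ≤ (N : ℝ) ^ 2 := by
      have : (1 : ℝ) ≤ N := by exact_mod_cast hN
      nlinarith
    nlinarith

/-- Each nonzero point gives a rational solution with controlled denominator. -/
theorem point_sol (m0 : ℤ) (hm0 : m0 ≠ 0) (P : (Eprime m0).Point) (hP : P ≠ 0) :
    ∃ x y : ℚ, ∃ z : ℤ, x ^ 3 + y ^ 3 = m0 ∧ z ≠ 0 ∧
      (∃ a : ℤ, (a : ℚ) = z * x) ∧ (∃ b : ℤ, (b : ℚ) = z * y) ∧
      Real.log |(z : ℝ)| ≤ Real.log 6 + 2 * hgt m0 P ∧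
      ∃ h, P = Point.some (12 * m0 / (x + y)) (36 * m0 * (x - y) / (x + y)) h := by
  rcases P with _ | ⟨X, Y, h⟩
  · exact absurd rfl hP
  have e := (equation_iff _ _).mp h.1
  simp only [Eprime] at e
  have f : Y ^ 2 = X ^ 3 - 432 * (m0 : ℚ) ^ 2 := by linarith
  have hm : (m0 : ℚ) ≠ 0 := by exact_mod_cast hm0
  have hm2 : 0 < (m0 : ℚ) ^ 2 := by positivity
  have hX : X ≠ 0 := by
    rintro rfl
    nlinarith [sq_nonneg Y]
  have hd : (X.den : ℚ) ≠ 0 := by exact_mod_cast X.den_nz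
  have hXd : X * X.den = X.num := Rat.mul_den_eq_num X
  have hn : X.num ≠ 0 := Rat.num_ne_zero.mpr hX
  -- integrality of `Y * den ^ 2`
  obtain ⟨w, hw⟩ : ∃ w : ℤ, (w : ℚ) = Y * X.den ^ 2 := by
    have hint : _root_.IsIntegral ℤ (Y * (X.den : ℚ) ^ 2) := by
      have h2 : (Y * (X.den : ℚ) ^ 2) ^ 2 =
          ((X.den * (X.num ^ 3 - 432 * m0 ^ 2 * X.den ^ 3) : ℤ) : ℚ) := by
        push_cast
        rw [← hXd, mul_pow, f]
        ring
      refine _root_.IsIntegral.of_pow (n := 2) (by norm_num) ?_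
      rw [h2]
      exact isIntegral_algebraMap
    obtain ⟨w, hw⟩ := IsIntegrallyClosed.isIntegral_iff.mp hint
    exact ⟨w, hw⟩
  have hsum : (36 * m0 + Y) / (6 * X) + (36 * m0 - Y) / (6 * X) = 12 * m0 / X := by
    field_simp
    ring
  have hdiff : (36 * m0 + Y) / (6 * X) - (36 * m0 - Y) / (6 * X) = Y / (3 * X) := by
    field_simp
    ring
  refine ⟨(36 * m0 + Y) / (6 * X), (36 * m0 - Y) / (6 * X), 6 * X.num * X.den, ?_, ?_, ?_, ?_, ?_, ?_⟩
  · field_simp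
    grind
  · have := X.den_nz
    positivity
  · refine ⟨36 * m0 * X.den ^ 2 + w, ?_⟩
    push_cast
    rw [hw, ← hXd]
    field_simp
  · refine ⟨36 * m0 * X.den ^ 2 - w, ?_⟩
    push_cast
    rw [hw, ← hXd]
    field_simp
  · have hh : hgt m0 (Point.some X Y h) = Real.log (max X.num.natAbs X.den : ℕ) := by
      rw [hgt, Point.xRep_some, ← logHeight₁_eq_logHeight, Rat.logHeight₁_eq_log_max]
    rw [hh]
    have h1 : (1 : ℝ) ≤ (max X.num.natAbs X.den : ℕ) := by
      exact_mod_cast le_max_of_le_right X.den_pos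
    rw [show Real.log 6 + 2 * Real.log (max X.num.natAbs X.den : ℕ) =
      Real.log (6 * ((max X.num.natAbs X.den : ℕ) : ℝ) ^ 2) by
        rw [Real.log_mul (by norm_num) (by positivity), Real.log_pow]; norm_num]
    apply Real.log_le_log
    · have := X.den_nz
      positivity
    · push_cast
      rw [abs_mul, abs_mul, pow_two, ← mul_assoc]
      have a1 : |(X.num : ℝ)| ≤ max (X.num.natAbs : ℝ) (X.den : ℝ) := by
        apply le_max_of_le_left
        rw [Nat.cast_natAbs]
        simp
      have a2 : |(X.den : ℝ)| ≤ max (X.num.natAbs : ℝ) (X.den : ℝ) := by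
        apply le_max_of_le_right
        simp
      have a3 : |(6 : ℝ)| = 6 := by norm_num
      rw [a3]
      gcongr
  · have g1 : 12 * (m0 : ℚ) / ((36 * m0 + Y) / (6 * X) + (36 * m0 - Y) / (6 * X)) = X := by
      rw [hsum]
      field_simp
    have g2 : 36 * (m0 : ℚ) * ((36 * m0 + Y) / (6 * X) - (36 * m0 - Y) / (6 * X)) /
        ((36 * m0 + Y) / (6 * X) + (36 * m0 - Y) / (6 * X)) = Y := by
      rw [hsum, hdiff]
      field_simp
      ring
    simp only [g1, g2]
    exact ⟨h, trivial⟩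

theorem sol_finite (m : ℤ) (hm : m ≠ 0) : {p : ℤ × ℤ | p.1 ^ 3 + p.2 ^ 3 = m}.Finite := by
  apply Set.Finite.subset (Set.finite_Icc ((-(2 * |m|), -(2 * |m|)) : ℤ × ℤ) (2 * |m|, 2 * |m|))
  rintro ⟨x, y⟩ h
  simp only [Set.mem_ofPred_eq] at h
  have hf : (x + y) * (x ^ 2 - x * y + y ^ 2) = m := by rw [← h]; ring
  have hs : x + y ≠ 0 := by
    intro h0
    rw [h0, zero_mul] at hf
    exact hm hf.symm
  have hq : x ^ 2 - x * y + y ^ 2 ≤ |m| := by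
    rw [← hf, abs_mul]
    have h1 : 1 ≤ |x + y| := Int.one_le_abs hs
    have h2 := le_abs_self (x ^ 2 - x * y + y ^ 2)
    nlinarith [abs_nonneg (x ^ 2 - x * y + y ^ 2)]
  have hM : 1 ≤ |m| := Int.one_le_abs hm
  have hx : x ^ 2 ≤ (2 * |m|) ^ 2 := by nlinarith [sq_nonneg (x - 2 * y)]
  have hy : y ^ 2 ≤ (2 * |m|) ^ 2 := by nlinarith [sq_nonneg (y - 2 * x)]
  have hx' := abs_le_of_sq_le_sq' hx (by positivity)
  have hy' := abs_le_of_sq_le_sq' hy (by positivity)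
  exact ⟨⟨hx'.1, hy'.1⟩, ⟨hx'.2, hy'.2⟩⟩

/-- The counting construction. -/
theorem construct (m0 : ℤ) (hm0 : m0 ≠ 0) {ι : Type*} (s : Finset ι)
    (ψ : ι → (Eprime m0).Point) (hinj : Set.InjOn ψ s) (h0 : ∀ i ∈ s, ψ i ≠ 0)
    (H : ℝ) (hH : ∀ i ∈ s, hgt m0 (ψ i) ≤ H) (t : ℕ) :
    ∃ m : ℤ, (2 : ℝ) ^ t ≤ |(m : ℝ)| ∧ s.card ≤ Nf m ∧
      Real.log |(m : ℝ)| ≤ Real.log |(m0 : ℝ)| + 3 * (s.card * (Real.log 6 + 2 * H) + t * Real.log 2) := by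
  classical
  have hsol : ∀ i, ∃ x y : ℚ, ∃ z : ℤ, i ∈ s → (x ^ 3 + y ^ 3 = m0 ∧ z ≠ 0 ∧
      (∃ a : ℤ, (a : ℚ) = z * x) ∧ (∃ b : ℤ, (b : ℚ) = z * y) ∧
      Real.log |(z : ℝ)| ≤ Real.log 6 + 2 * hgt m0 (ψ i) ∧
      ∃ h, ψ i = Point.some (12 * m0 / (x + y)) (36 * m0 * (x - y) / (x + y)) h) := by
    intro i
    by_cases hi : i ∈ s
    · obtain ⟨x, y, z, h⟩ := point_sol m0 hm0 (ψ i) (h0 i hi)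
      exact ⟨x, y, z, fun _ ↦ h⟩
    · exact ⟨0, 0, 0, fun h ↦ absurd h hi⟩
  choose x y z hz using hsol
  set D : ℤ := (∏ i ∈ s, z i) * 2 ^ t with hD
  have hprod : ∏ i ∈ s, z i ≠ 0 := Finset.prod_ne_zero_iff.mpr fun i hi ↦ (hz i hi).2.1
  have hD0 : D ≠ 0 := mul_ne_zero hprod (by positivity)
  have hint : ∀ i, ∃ a b : ℤ, i ∈ s → ((a : ℚ) = D * x i ∧ (b : ℚ) = D * y i) := by
    intro i
    by_cases hi : i ∈ s
    · obtain ⟨-, -, ⟨a, ha⟩, ⟨b, hb⟩, -⟩ := hz i hi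
      obtain ⟨k, hk⟩ : z i ∣ D := (Finset.dvd_prod_of_mem z hi).mul_right _
      refine ⟨k * a, k * b, fun _ ↦ ⟨?_, ?_⟩⟩
      · rw [hk]; push_cast; rw [ha]; ring
      · rw [hk]; push_cast; rw [hb]; ring
    · exact ⟨0, 0, fun h ↦ absurd h hi⟩
  choose a b hab using hint
  have hm : m0 * D ^ 3 ≠ 0 := mul_ne_zero hm0 (pow_ne_zero _ hD0)
  have hDq : (D : ℚ) ≠ 0 := by exact_mod_cast hD0
  have hpR : (1 : ℝ) ≤ |((∏ i ∈ s, z i : ℤ) : ℝ)| := by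
    exact_mod_cast Int.one_le_abs hprod
  have hm0R : (1 : ℝ) ≤ |(m0 : ℝ)| := by exact_mod_cast Int.one_le_abs hm0
  have hDR : |(D : ℝ)| = |((∏ i ∈ s, z i : ℤ) : ℝ)| * 2 ^ t := by
    rw [hD, Int.cast_mul, abs_mul]
    simp
  have h2t : (1 : ℝ) ≤ 2 ^ t := one_le_pow₀ (by norm_num)
  have hDt : (2 : ℝ) ^ t ≤ |(D : ℝ)| := by
    rw [hDR]
    nlinarith
  refine ⟨m0 * D ^ 3, ?_, ?_, ?_⟩
  · rw [Int.cast_mul, Int.cast_pow, abs_mul, abs_pow]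
    have h1 : |(D : ℝ)| ≤ |(D : ℝ)| ^ 3 := le_self_pow₀ (h2t.trans hDt) (by norm_num)
    nlinarith [abs_nonneg (D : ℝ)]
  · rw [Nf, ← Set.ncard_coe_finset]
    refine Set.ncard_le_ncard_of_injOn (fun i ↦ (a i, b i)) ?_ ?_ (sol_finite _ hm)
    · intro i hi
      obtain ⟨ha, hb⟩ := hab i hi
      have hxy := (hz i hi).1
      simp only [Set.mem_ofPred_eq]
      have : ((a i : ℚ)) ^ 3 + (b i : ℚ) ^ 3 = m0 * D ^ 3 := by
        rw [ha, hb, ← hxy]; ring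
      exact_mod_cast this
    · intro i hi j hj hij
      simp only [Prod.mk.injEq] at hij
      obtain ⟨hai, hbi⟩ := hab i hi
      obtain ⟨haj, hbj⟩ := hab j hj
      have hx : x i = x j := mul_left_cancel₀ hDq (by rw [← hai, ← haj, hij.1])
      have hy : y i = y j := mul_left_cancel₀ hDq (by rw [← hbi, ← hbj, hij.2])
      apply hinj hi hj
      obtain ⟨-, -, -, -, -, h1, e1⟩ := hz i hi
      obtain ⟨-, -, -, -, -, h2, e2⟩ := hz j hj
      rw [e1, e2]
      simp only [hx, hy]
  · have hDne : |(D : ℝ)| ≠ 0 := by positivity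
    rw [Int.cast_mul, Int.cast_pow, abs_mul, abs_pow, Real.log_mul (by positivity) (by positivity),
      Real.log_pow, hDR, Real.log_mul (by positivity) (by positivity), Real.log_pow]
    have : Real.log |((∏ i ∈ s, z i : ℤ) : ℝ)| ≤ s.card * (Real.log 6 + 2 * H) := by
      rw [Int.cast_prod, Finset.abs_prod, Real.log_prod]
      · rw [← nsmul_eq_mul]
        apply Finset.sum_le_card_nsmul
        intro i hi
        have h1 := (hz i hi).2.2.2.2.1
        have h2 := hH i hi
        linarith
      · intro i hi
        have := (hz i hi).2.1
        positivity
    push_cast at this ⊢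
    linarith

end Aux

theorem stmt_0 (m0 : ℤ) (hm0 : m0 ≠ 0) (r : ℕ) (hr : 1 ≤ r)
    (φ : (Fin r → ℤ) →+ (Eprime m0).Point) (hφ : Function.Injective φ) :
    ∃ c : ℝ, 0 < c ∧ ∀ B : ℝ, ∃ m : ℤ, B < |(m : ℝ)| ∧
      c * Real.log |(m : ℝ)| ^ ((r : ℝ) / (r + 2)) < (Nf m : ℝ) := by
  classical
  obtain ⟨K, hK, hsum⟩ := hgt_sum m0 Finset.univ (fun i : Fin r ↦ φ (Pi.single i 1))
  have hm0R : (1 : ℝ) ≤ |(m0 : ℝ)| := by exact_mod_cast Int.one_le_abs hm0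
  have hl0 : 0 ≤ Real.log |(m0 : ℝ)| := Real.log_nonneg hm0R
  have hl6 : 0 < Real.log 6 := Real.log_pos (by norm_num)
  have hl2 : 0 < Real.log 2 := Real.log_pos (by norm_num)
  set A : ℝ := Real.log |(m0 : ℝ)| + 3 * ((Real.log 6 + 2 * K) + Real.log 2) with hA
  have hApos : 0 < A := by positivity
  set e : ℝ := (r : ℝ) / (r + 2) with he
  have he0 : 0 ≤ e := by positivity
  have hAe : 0 < A ^ e := Real.rpow_pos_of_pos hApos e
  refine ⟨1 / (2 * A ^ e), by positivity, fun B ↦ ?_⟩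
  obtain ⟨n, hn⟩ := pow_unbounded_of_one_lt B (by norm_num : (1 : ℝ) < 2)
  set N := n + 1 with hN
  have hN1 : 1 ≤ N := by omega
  have hNR : (1 : ℝ) ≤ N := by exact_mod_cast hN1
  let ψ : (Fin r → ℕ) → (Eprime m0).Point := fun v ↦ φ (fun i ↦ (v i : ℤ))
  let s : Finset (Fin r → ℕ) := Fintype.piFinset fun _ ↦ Finset.Icc 1 N
  have hcard : s.card = N ^ r := by simp [s]
  have hmem : ∀ v ∈ s, ∀ i, 1 ≤ v i ∧ v i ≤ N := by
    intro v hv i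
    simpa using Fintype.mem_piFinset.mp hv i
  have hψ : ∀ v, ψ v = ∑ i, v i • φ (Pi.single i 1) := by
    intro v
    simp only [ψ]
    rw [show (fun i ↦ (v i : ℤ)) = ∑ i, v i • (Pi.single i 1 : Fin r → ℤ) by
      ext j
      simp [Finset.sum_apply, Pi.single_apply], map_sum]
    exact Finset.sum_congr rfl fun i _ ↦ map_nsmul φ _ _
  obtain ⟨m, hm1, hm2, hm3⟩ := construct m0 hm0 s ψ
    (by
      intro v _ w _ hvw
      have := hφ hvw
      ext i
      exact_mod_cast congrFun this i)
    (by
      intro v hv h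
      have h1 : (fun i ↦ (v i : ℤ)) = 0 := hφ (by rw [map_zero]; exact h)
      have h2 := (hmem v hv ⟨0, hr⟩).1
      have h3 := congrFun h1 ⟨0, hr⟩
      simp at h3
      omega)
    (K * N ^ 2)
    (by
      intro v hv
      rw [hψ]
      exact hsum N hN1 v fun i ↦ (hmem v hv i).2) N
  have hmB : B < |(m : ℝ)| := by
    refine hn.trans_le (le_trans ?_ hm1)
    exact pow_le_pow_right₀ (by norm_num) (by omega)
  refine ⟨m, hmB, ?_⟩
  have hm1' : (1 : ℝ) ≤ |(m : ℝ)| := le_trans (one_le_pow₀ (by norm_num)) hm1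
  have hlog0 : 0 ≤ Real.log |(m : ℝ)| := Real.log_nonneg hm1'
  have hlog : Real.log |(m : ℝ)| ≤ A * (N : ℝ) ^ (r + 2) := by
    refine hm3.trans ?_
    rw [hcard, hA]
    push_cast
    have p1 : (1 : ℝ) ≤ (N : ℝ) ^ r := one_le_pow₀ hNR
    have p2 : (1 : ℝ) ≤ (N : ℝ) ^ 2 := one_le_pow₀ hNR
    have p3 : (N : ℝ) ≤ (N : ℝ) ^ (r + 2) := le_self_pow₀ hNR (by omega)
    have p4 : (N : ℝ) ^ r ≤ (N : ℝ) ^ (r + 2) := pow_le_pow_right₀ hNR (by omega)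
    have p5 : (1 : ℝ) ≤ (N : ℝ) ^ (r + 2) := one_le_pow₀ hNR
    have p6 : (N : ℝ) ^ r * (2 * (K * N ^ 2)) = 2 * K * (N : ℝ) ^ (r + 2) := by ring
    have q1 := mul_le_mul_of_nonneg_left p5 hl0
    have q2 := mul_le_mul_of_nonneg_left p4 hl6.le
    have q3 := mul_le_mul_of_nonneg_left p3 hl2.le
    nlinarith
  have hpow : Real.log |(m : ℝ)| ^ e ≤ A ^ e * (N : ℝ) ^ r := by
    refine (Real.rpow_le_rpow hlog0 hlog he0).trans ?_
    rw [Real.mul_rpow hApos.le (by positivity), ← Real.rpow_natCast, ← Real.rpow_mul (by positivity)]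
    have : ((r + 2 : ℕ) : ℝ) * e = r := by
      rw [he]
      push_cast
      field_simp
    rw [this, Real.rpow_natCast]
  have hNf : (N : ℝ) ^ r ≤ Nf m := by
    rw [hcard] at hm2
    exact_mod_cast hm2
  have hNpos : 0 < (N : ℝ) ^ r := by positivity
  calc 1 / (2 * A ^ e) * Real.log |(m : ℝ)| ^ e
      ≤ 1 / (2 * A ^ e) * (A ^ e * (N : ℝ) ^ r) := by gcongr
    _ = (N : ℝ) ^ r / 2 := by field_simp
    _ < (N : ℝ) ^ r := by linarith
    _ ≤ Nf m := hNf
end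

section
/- For every real number $B$ there exists an integer $m$ with $|m| > B$ such that $N_f(m) > 4.2 \times 10^{-6} \cdot (\log |m|)^{11/13}$. -/
/-- The rank 11 parameter of Elkies and Rogers. -/
abbrev kk : ℤ := 13293998056584952174157235

/-- The curve `Y² = X³ - 432 k²`. -/
def EC : WeierstrassCurve.Affine ℚ := ⟨0, 0, 0, 0, -432 * (kk : ℚ) ^ 2⟩

lemma EC_a1 : EC.a₁ = 0 := rfl
lemma EC_a2 : EC.a₂ = 0 := rfl
lemma EC_a3 : EC.a₃ = 0 := rfl
lemma EC_a4 : EC.a₄ = 0 := rfl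
lemma EC_a6 : EC.a₆ = -432 * (kk : ℚ) ^ 2 := rfl

lemma EC_equation {x y : ℚ} : EC.Equation x y ↔ y ^ 2 = x ^ 3 - 432 * (kk : ℚ) ^ 2 := by
  rw [WeierstrassCurve.Affine.equation_iff, EC_a1, EC_a2, EC_a3, EC_a4, EC_a6]
  constructor <;> intro h <;> linarith

lemma EC_negY (x y : ℚ) : EC.negY x y = -y := by
  simp [WeierstrassCurve.Affine.negY, EC_a1, EC_a3]

lemma EC_nonsingular {x y : ℚ} (h : y ^ 2 = x ^ 3 - 432 * (kk : ℚ) ^ 2) :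
    EC.Nonsingular x y := by
  rw [WeierstrassCurve.Affine.nonsingular_iff, EC_equation, EC_a1, EC_a2, EC_a3, EC_a4]
  refine ⟨h, ?_⟩
  by_contra hc
  push Not at hc
  obtain ⟨h1, h2⟩ := hc
  have hx : x = 0 := by
    have : x ^ 2 = 0 := by linarith
    exact pow_eq_zero_iff (two_ne_zero) |>.1 this
  have hy : y = 0 := by linarith
  subst hx hy
  norm_num at h

/-- no rational cube root of `432 k²` -/
lemma no_cube (x : ℚ) : x ^ 3 ≠ 432 * (kk : ℚ) ^ 2 := by
  intro h
  have h1 : ((x : ℝ)) ^ 3 = ((432 * kk ^ 2 : ℤ) : ℝ) := by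
    have : ((x ^ 3 : ℚ) : ℝ) = ((432 * (kk : ℚ) ^ 2 : ℚ) : ℝ) := by rw [h]
    push_cast at this ⊢
    exact this
  have h2 : ∃ y : ℤ, (x : ℝ) = y := by
    by_contra hc
    exact (irrational_nrt_of_notint_nrt 3 _ h1 hc (by norm_num)) ⟨x, rfl⟩
  obtain ⟨y, hy⟩ := h2
  rw [hy] at h1
  have h3 : y ^ 3 = 432 * kk ^ 2 := by exact_mod_cast h1
  have h5 : (5 : ℤ) ∣ y := by
    have : (5 : ℤ) ∣ y ^ 3 := by rw [h3]; norm_num [kk]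
    exact Int.Prime.dvd_pow' (by norm_num) this
  obtain ⟨w, rfl⟩ := h5
  have : (125 : ℤ) ∣ 432 * kk ^ 2 := ⟨w ^ 3, by rw [← h3]; ring⟩
  norm_num [kk] at this

/-- Description of the sum of two affine points, in the nontrivial case. -/
lemma add_cases {x₁ y₁ x₂ y₂ : ℚ} (h₁ : EC.Nonsingular x₁ y₁) (h₂ : EC.Nonsingular x₂ y₂) :
    (x₁ = x₂ ∧ WeierstrassCurve.Affine.Point.some x₁ y₁ h₁ + .some x₂ y₂ h₂ = 0) ∨
    ∃ L y₃ : ℚ, ∃ h₃ : EC.Nonsingular (L ^ 2 - x₁ - x₂) y₃,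
      WeierstrassCurve.Affine.Point.some x₁ y₁ h₁ + .some x₂ y₂ h₂ = .some _ _ h₃ ∧
      ((x₁ ≠ x₂ ∧ L * (x₁ - x₂) = y₁ - y₂) ∨ (x₁ = x₂ ∧ y₁ = y₂ ∧ y₁ ≠ 0 ∧ L * (2 * y₁) = 3 * x₁ ^ 2)) := by
  by_cases hxy : x₁ = x₂ ∧ y₁ = EC.negY x₂ y₂
  · left
    exact ⟨hxy.1, WeierstrassCurve.Affine.Point.add_of_Y_eq hxy.1 hxy.2⟩
  · right
    have hX : EC.addX x₁ x₂ (EC.slope x₁ x₂ y₁ y₂) = EC.slope x₁ x₂ y₁ y₂ ^ 2 - x₁ - x₂ := by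
      simp [WeierstrassCurve.Affine.addX, EC_a1, EC_a2]
    have h3 := WeierstrassCurve.Affine.nonsingular_add h₁ h₂ hxy
    have hadd := WeierstrassCurve.Affine.Point.add_some hxy (h₁ := h₁) (h₂ := h₂)
    refine ⟨EC.slope x₁ x₂ y₁ y₂, _, hX ▸ h3, ?_, ?_⟩
    · rw [hadd]
      congr 1
    · by_cases hx : x₁ = x₂
      · right
        have hy : y₁ ≠ EC.negY x₂ y₂ := fun h => hxy ⟨hx, h⟩
        have hsl := WeierstrassCurve.Affine.slope_of_Y_ne (W := EC) hx hy
        rw [EC_negY] at hy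
        have e1 := EC_equation.1 h₁.1
        have e2 := EC_equation.1 h₂.1
        subst hx
        have : (y₁ - y₂) * (y₁ + y₂) = 0 := by linarith
        have hyy : y₁ = y₂ := by
          rcases mul_eq_zero.1 this with h | h
          · linarith
          · exact absurd (by linarith) hy
        subst hyy
        have hy0 : y₁ ≠ 0 := by
          rintro rfl
          simp at hy
        refine ⟨rfl, rfl, hy0, ?_⟩
        rw [hsl, EC_negY, EC_a1, EC_a2, EC_a4]
        have : y₁ - -y₁ = 2 * y₁ := by ring
        rw [this, div_mul_cancel₀ _ (by simpa using hy0)]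
        ring
      · left
        refine ⟨hx, ?_⟩
        rw [WeierstrassCurve.Affine.slope_of_X_ne hx, div_mul_cancel₀ _ (sub_ne_zero.2 hx)]

/-- `x(P) - t` for a point of the curve, `1` at the origin. -/
noncomputable def dd {F : Type*} [Field F] [Algebra ℚ F] (t : F) : EC.Point → F
  | .zero => 1
  | .some x _ _ => algebraMap ℚ F x - t

lemma dd_ne_zero {F : Type*} [Field F] [Algebra ℚ F] {t : F}
    (ht : t ^ 3 = algebraMap ℚ F (432 * (kk : ℚ) ^ 2)) (P : EC.Point) : dd t P ≠ 0 := by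
  rcases P with _ | ⟨x, y, h⟩
  · exact one_ne_zero
  · intro hc
    have h1 : t = algebraMap ℚ F x := (sub_eq_zero.1 hc).symm
    rw [h1, ← map_pow] at ht
    exact no_cube x ((algebraMap ℚ F).injective ht)

lemma dd_add {F : Type*} [Field F] [Algebra ℚ F] {t : F}
    (ht : t ^ 3 = algebraMap ℚ F (432 * (kk : ℚ) ^ 2)) (P Q : EC.Point) :
    IsSquare (dd t P * dd t Q * dd t (P + Q)) := by
  rcases P with _ | ⟨x₁, y₁, h₁⟩
  · change IsSquare (1 * dd t Q * dd t (0 + Q))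
    rw [zero_add, one_mul]
    exact ⟨_, rfl⟩
  rcases Q with _ | ⟨x₂, y₂, h₂⟩
  · change IsSquare (_ * 1 * dd t (_ + 0))
    rw [add_zero, mul_one]
    exact ⟨_, rfl⟩
  have e1 := EC_equation.1 h₁.1
  have e2 := EC_equation.1 h₂.1
  rcases add_cases h₁ h₂ with ⟨rfl, h⟩ | ⟨L, y₃, h₃, h, hL⟩
  · rw [h]
    change IsSquare (_ * _ * (1 : F))
    rw [mul_one]
    exact ⟨_, rfl⟩
  · rw [h]
    change IsSquare ((algebraMap ℚ F x₁ - t) * (algebraMap ℚ F x₂ - t) *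
      (algebraMap ℚ F (L ^ 2 - x₁ - x₂) - t))
    have key : x₂ ^ 2 + x₁ * x₂ + x₁ ^ 2 - L ^ 2 * (x₂ - x₁) - 2 * L * y₁ = 0 := by
      rcases hL with ⟨hx, hL⟩ | ⟨rfl, rfl, hy, hL⟩
      · have : (x₂ - x₁) * (x₂ ^ 2 + x₁ * x₂ + x₁ ^ 2 - L ^ 2 * (x₂ - x₁) - 2 * L * y₁) = 0 := by
          have hy2 : y₂ = y₁ - L * (x₁ - x₂) := by linarith
          rw [hy2] at e2
          linear_combination e1 - e2
        exact (mul_eq_zero.1 this).resolve_left (sub_ne_zero.2 (Ne.symm hx))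
      · linear_combination -hL
    have key' := congrArg (algebraMap ℚ F) key
    have e1' := congrArg (algebraMap ℚ F) e1
    rw [map_sub, ← ht] at e1'
    simp only [map_add, map_sub, map_mul, map_pow, map_zero, map_ofNat] at key' e1' ⊢
    refine ⟨algebraMap ℚ F L * (t - algebraMap ℚ F x₁) + algebraMap ℚ F y₁, ?_⟩
    linear_combination (t - algebraMap ℚ F x₁) * key' - e1'

lemma dd_mul_square_iff {F : Type*} [Field F] {a b c : F} (ha : a ≠ 0) (hb : b ≠ 0)
    (h : IsSquare (a * b * c)) (h1 : IsSquare a) (h2 : IsSquare b) : IsSquare c := by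
  have : c = (a * b * c) / (a * b) := by field_simp
  rw [this]
  exact h.div (h1.mul h2)

/-- The points with `x - t` a square. -/
noncomputable def HH {F : Type*} [Field F] [Algebra ℚ F] (t : F)
    (ht : t ^ 3 = algebraMap ℚ F (432 * (kk : ℚ) ^ 2)) : AddSubgroup EC.Point where
  carrier := {P | IsSquare (dd t P)}
  zero_mem' := ⟨1, by change (1 : F) = 1 * 1; ring⟩
  add_mem' := fun {P Q} hP hQ =>
    dd_mul_square_iff (dd_ne_zero ht P) (dd_ne_zero ht Q) (dd_add ht P Q) hP hQ
  neg_mem' := by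
    intro P hP
    have h := dd_add ht P (-P)
    rw [add_neg_cancel] at h
    change IsSquare (_ * _ * (1 : F)) at h
    rw [mul_one] at h
    have h2 : dd t (-P) = (dd t P * dd t (-P)) / dd t P := by
      field_simp [dd_ne_zero ht P]
    change IsSquare (dd t (-P))
    rw [h2]
    exact h.div hP

lemma two_mem_HH {F : Type*} [Field F] [Algebra ℚ F] {t : F}
    (ht : t ^ 3 = algebraMap ℚ F (432 * (kk : ℚ) ^ 2)) (P : EC.Point) : P + P ∈ HH t ht := by
  have h := dd_add ht P P
  have h2 : dd t (P + P) = (dd t P * dd t P * dd t (P + P)) / (dd t P * dd t P) := by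
    field_simp [dd_ne_zero ht P]
  change IsSquare (dd t (P + P))
  rw [h2]
  exact h.div ⟨_, rfl⟩

lemma no_two_torsion (P : EC.Point) (h : P + P = 0) : P = 0 := by
  rcases P with _ | ⟨x, y, hh⟩
  · rfl
  · exfalso
    rcases add_cases hh hh with ⟨-, h'⟩ | ⟨L, y₃, h₃, h', -⟩
    · have h1 := eq_neg_of_add_eq_zero_left h'
      rw [WeierstrassCurve.Affine.Point.neg_some] at h1
      have h2 : y = EC.negY x y := by injection h1
      rw [EC_negY] at h2
      have hy : y = 0 := by linarith
      have := EC_equation.1 hh.1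
      rw [hy] at this
      exact no_cube x (by linarith)
    · rw [h'] at h
      exact WeierstrassCurve.Affine.Point.some_ne_zero _ h

lemma toZMod_eq_zero_iff {p : ℕ} [Fact p.Prime] (x : ℤ_[p]) :
    PadicInt.toZMod x = 0 ↔ ‖x‖ < 1 := by
  rw [← RingHom.mem_ker, PadicInt.ker_toZMod, PadicInt.maximalIdeal_eq_span_p,
    Ideal.mem_span_singleton, PadicInt.norm_lt_one_iff_dvd]

lemma hensel_root {p : ℕ} [Fact p.Prime] (n : ℕ) (c a : ℤ_[p])
    (h1 : PadicInt.toZMod a ^ n = PadicInt.toZMod c)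
    (h2 : (n : ZMod p) * PadicInt.toZMod a ^ (n - 1) ≠ 0) :
    ∃ z : ℤ_[p], z ^ n = c ∧ PadicInt.toZMod z = PadicInt.toZMod a := by
  have hd : ‖(n : ℤ_[p]) * a ^ (n - 1)‖ = 1 := by
    refine le_antisymm (PadicInt.norm_le_one _) (not_lt.1 fun h => h2 ?_)
    rw [← toZMod_eq_zero_iff] at h
    simpa using h
  have hn : ‖a ^ n - c‖ < 1 := by
    rw [← toZMod_eq_zero_iff, map_sub, map_pow, h1, sub_self]
  obtain ⟨z, hz, hz2, -⟩ := hensels_lemma (R := ℤ_[p])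
    (F := Polynomial.X ^ n - Polynomial.C c) (a := a) (by
      simp only [Polynomial.derivative_X_pow, Polynomial.derivative_C,
        map_sub, map_mul, map_pow, Polynomial.aeval_X, Polynomial.aeval_C, map_natCast,
        sub_zero, Algebra.algebraMap_self, RingHom.id_apply, hd]
      simpa using hn)
  refine ⟨z, ?_, ?_⟩
  · simpa [sub_eq_zero] using hz
  · rw [← sub_eq_zero, ← map_sub, toZMod_eq_zero_iff]
    refine lt_of_lt_of_le hz2 ?_
    exact PadicInt.norm_le_one _

lemma int_zmod_eq {p : ℕ} {a b : ℤ} (h : (p : ℤ) ∣ a - b) : (a : ZMod p) = (b : ZMod p) := by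
  have := (ZMod.intCast_zmod_eq_zero_iff_dvd (a - b) p).2 h
  push_cast at this
  exact sub_eq_zero.1 this

lemma char_step {p : ℕ} [Fact p.Prime] (t0 : ℤ) (hc : (p : ℤ) ∣ t0 ^ 3 - 432 * kk ^ 2)
    (h3 : ¬ (p : ℤ) ∣ 3 * t0 ^ 2) : ∃ H : AddSubgroup EC.Point, (∀ P, P + P ∈ H) ∧
    (∀ (X D s : ℤ) (y : ℚ) (h : EC.Nonsingular ((X : ℚ) / (D : ℚ) ^ 2) y), D ≠ 0 →
      (p : ℤ) ∣ s ^ 2 - (X - t0 * D ^ 2) → ¬ (p : ℤ) ∣ 2 * s →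
      WeierstrassCurve.Affine.Point.some _ _ h ∈ H) ∧
    (∀ (X D : ℤ) (y : ℚ) (h : EC.Nonsingular ((X : ℚ) / (D : ℚ) ^ 2) y), D ≠ 0 →
      legendreSym p (X - t0 * D ^ 2) = -1 →
      WeierstrassCurve.Affine.Point.some _ _ h ∉ H) := by
  obtain ⟨t, ht, ht0⟩ := hensel_root (p := p) 3 (((432 * kk ^ 2 : ℤ)) : ℤ_[p]) (t0 : ℤ_[p])
    (by
      have := int_zmod_eq hc
      rw [map_intCast, map_intCast, ← this]
      push_cast
      rfl)
    (by
      rw [map_intCast]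
      intro h
      apply h3
      rw [← ZMod.intCast_zmod_eq_zero_iff_dvd]
      push_cast
      simpa using h)
  rw [map_intCast] at ht0
  have htq : ((t : ℚ_[p])) ^ 3 = algebraMap ℚ ℚ_[p] (432 * (kk : ℚ) ^ 2) := by
    have := congrArg (fun z : ℤ_[p] => (z : ℚ_[p])) ht
    simp only [PadicInt.coe_pow, PadicInt.coe_intCast] at this
    rw [this]
    push_cast
    simp
  have hval : ∀ (X D : ℤ) (y : ℚ) (h : EC.Nonsingular ((X : ℚ) / (D : ℚ) ^ 2) y), D ≠ 0 →
      dd (t : ℚ_[p]) (WeierstrassCurve.Affine.Point.some _ _ h) * (D : ℚ_[p]) ^ 2 =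
        (((X : ℤ_[p]) - t * (D : ℤ_[p]) ^ 2 : ℤ_[p]) : ℚ_[p]) := by
    intro X D y h hD
    have hD' : (D : ℚ_[p]) ≠ 0 := by exact_mod_cast hD
    change (algebraMap ℚ ℚ_[p] ((X : ℚ) / (D : ℚ) ^ 2) - (t : ℚ_[p])) * _ = _
    rw [map_div₀, map_pow, map_intCast, map_intCast]
    push_cast
    field_simp
  have hmod : ∀ X D : ℤ, PadicInt.toZMod ((X : ℤ_[p]) - t * (D : ℤ_[p]) ^ 2) =
      ((X - t0 * D ^ 2 : ℤ) : ZMod p) := by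
    intro X D
    simp [ht0]
  refine ⟨HH (t : ℚ_[p]) htq, two_mem_HH htq, ?_, ?_⟩
  · intro X D s y h hD hs h2
    have hD' : (D : ℚ_[p]) ≠ 0 := by exact_mod_cast hD
    obtain ⟨z, hz, -⟩ := hensel_root (p := p) 2 ((X : ℤ_[p]) - t * (D : ℤ_[p]) ^ 2) (s : ℤ_[p])
      (by
        rw [hmod, ← int_zmod_eq hs]
        push_cast
        simp)
      (by
        rw [map_intCast]
        intro h
        apply h2
        rw [← ZMod.intCast_zmod_eq_zero_iff_dvd]
        push_cast
        simpa using h)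
    have hv := hval X D y h hD
    rw [← hz] at hv
    refine ⟨(z : ℚ_[p]) / D, ?_⟩
    push_cast at hv
    field_simp
    linear_combination hv
  · rintro X D y h hD hl ⟨w, hw⟩
    rw [legendreSym.eq_neg_one_iff] at hl
    apply hl
    have hv := hval X D y h hD
    rw [hw] at hv
    have hsq : (w * D) ^ 2 = (((X : ℤ_[p]) - t * (D : ℤ_[p]) ^ 2 : ℤ_[p]) : ℚ_[p]) := by
      rw [← hv]; ring
    have hnorm : ‖w * (D : ℚ_[p])‖ ≤ 1 := by
      have h1 : ‖(w * (D : ℚ_[p])) ^ 2‖ ≤ 1 := by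
        rw [hsq]
        exact PadicInt.norm_le_one _
      rw [norm_pow] at h1
      exact (pow_le_one_iff_of_nonneg (norm_nonneg _) two_ne_zero).1 h1
    let u : ℤ_[p] := ⟨w * (D : ℚ_[p]), hnorm⟩
    have hu : u ^ 2 = (X : ℤ_[p]) - t * (D : ℤ_[p]) ^ 2 := by
      apply Subtype.ext
      rw [PadicInt.coe_pow]
      exact hsq
    rw [← hmod, ← hu, map_pow, pow_two]
    exact ⟨_, rfl⟩

/-- data of the eleven points -/
def XX : Fin 11 → ℤ := ![
  452996184606704284,
  581929399384268884,
  1081467578421064324,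
  3872813842845512929,
  14223977941223185681,
  23642591593617729121,
  60754162712252641996,
  186947444570606201329,
  529039483652343874084,
  953791970202901740001,
  119330278066293515680489]

/-- data of the eleven points -/
def YY : Fin 11 → ℤ := ![
  128879021298074168778095348,
  347445115527184289971582148,
  1090186592198757806762218468,
  7293893419137364085563841233,
  53644579362499981511120627071,
  98252123534609206746112661231,
  298317722774360709046010664644,
  2529513158175975931208754745967,
  11694736637462520801576013542148,
  6687030072821163200779849829351,
  36104560562310529545792373063330187]

/-- data of the eleven points -/
def DD : Fin 11 → ℤ := ![
  1,
  1,
  1,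
  2,
  1,
  6,
  11,
  11,
  23,
  47,
  416]

/-- auxiliary primes -/
def pp : Fin 11 → ℕ := ![35129, 139457, 6653, 36791, 39227, 227, 13499, 11519, 4421, 977, 9461]

/-- cube roots of `432 k²` modulo the auxiliary primes -/
def tt : Fin 11 → ℤ := ![29603, 107045, 5067, 4658, 29663, 44, 12465, 7333, 1440, 551, 5126]

/-- square roots modulo the auxiliary primes -/
def ss : Fin 11 → Fin 11 → ℤ := ![
  ![0, 28478, 18031, 21184, 26859, 18188, 18846, 24514, 24643, 19535, 34785],
  ![132160, 0, 105024, 93555, 48205, 78643, 21788, 16736, 79239, 71702, 7217],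
  ![1364, 1819, 0, 3156, 4917, 1811, 3933, 1421, 3728, 1245, 4861],
  ![29687, 25537, 23214, 0, 29729, 25845, 31702, 6481, 14019, 1008, 860],
  ![5842, 22261, 34808, 12865, 0, 17329, 23389, 7195, 35710, 13558, 13358],
  ![87, 25, 27, 92, 139, 0, 116, 81, 113, 225, 207],
  ![12365, 8243, 9874, 8517, 9493, 1978, 0, 272, 9267, 1236, 13350],
  ![6761, 7657, 2829, 10213, 11247, 8950, 6706, 0, 8708, 4503, 9753],
  ![3372, 2320, 1745, 1765, 118, 81, 2932, 1456, 0, 3177, 3335],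
  ![515, 61, 799, 880, 342, 622, 615, 346, 14, 0, 962],
  ![7913, 278, 1101, 4566, 6407, 362, 8477, 4260, 5920, 3129, 0]]

lemma DD_ne (i : Fin 11) : DD i ≠ 0 := by
  fin_cases i <;> simp [DD]

lemma data_eq (i : Fin 11) : YY i ^ 2 = XX i ^ 3 - 432 * kk ^ 2 * DD i ^ 6 := by
  fin_cases i <;> norm_num [XX, YY, DD, kk]

lemma PP_nonsingular (i : Fin 11) :
    EC.Nonsingular ((XX i : ℚ) / (DD i : ℚ) ^ 2) ((YY i : ℚ) / (DD i : ℚ) ^ 3) := by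
  apply EC_nonsingular
  have h : (DD i : ℚ) ≠ 0 := by exact_mod_cast DD_ne i
  have h2 : (YY i : ℚ) ^ 2 = (XX i : ℚ) ^ 3 - 432 * (kk : ℚ) ^ 2 * (DD i : ℚ) ^ 6 := by
    exact_mod_cast data_eq i
  rw [div_pow, div_pow, h2]
  field_simp

/-- The eleven points. -/
def PP (i : Fin 11) : EC.Point := .some _ _ (PP_nonsingular i)

lemma pp_prime (i : Fin 11) : (pp i).Prime := by
  fin_cases i <;> norm_num [pp]

lemma tt_cube (i : Fin 11) : (pp i : ℤ) ∣ tt i ^ 3 - 432 * kk ^ 2 := by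
  fin_cases i <;> norm_num [pp, tt, kk]

lemma tt_ne (i : Fin 11) : ¬ (pp i : ℤ) ∣ 3 * tt i ^ 2 := by
  fin_cases i <;> norm_num [pp, tt]

lemma ss_sq : ∀ i j : Fin 11, i ≠ j → (pp i : ℤ) ∣ ss i j ^ 2 - (XX j - tt i * DD j ^ 2) := by
  decide +kernel

lemma ss_ne : ∀ i j : Fin 11, i ≠ j → ¬ (pp i : ℤ) ∣ 2 * ss i j := by
  decide +kernel

lemma leg_data (i : Fin 11) [Fact (pp i).Prime] :
    legendreSym (pp i) (XX i - tt i * DD i ^ 2) = -1 := by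
  rw [jacobiSym.legendreSym.to_jacobiSym]
  fin_cases i <;> simp only [pp, XX, tt, DD] <;> norm_num [Matrix.cons_val]

lemma char_i (i : Fin 11) : ∃ H : AddSubgroup EC.Point, (∀ P, P + P ∈ H) ∧
    (∀ j, i ≠ j → PP j ∈ H) ∧ PP i ∉ H := by
  have : Fact (pp i).Prime := ⟨pp_prime i⟩
  obtain ⟨H, h1, h2, h3⟩ := char_step (p := pp i) (tt i) (tt_cube i) (tt_ne i)
  exact ⟨H, h1, fun j hj => h2 _ _ (ss i j) _ _ (DD_ne j) (ss_sq i j hj) (ss_ne i j hj),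
    h3 _ _ _ _ (DD_ne i) (leg_data i)⟩

lemma indep_even (n : Fin 11 → ℤ) (h : ∑ i, n i • PP i = 0) (i : Fin 11) : Even (n i) := by
  obtain ⟨H, h1, h2, h3⟩ := char_i i
  by_contra hodd
  rw [Int.not_even_iff_odd] at hodd
  obtain ⟨a, ha⟩ := hodd
  have hs : ∑ j ∈ Finset.univ.erase i, n j • PP j ∈ H := by
    apply AddSubgroup.sum_mem
    intro j hj
    exact H.zsmul_mem (h2 j (Finset.ne_of_mem_erase hj).symm) _
  rw [← Finset.add_sum_erase _ _ (Finset.mem_univ i)] at h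
  have h4 : n i • PP i ∈ H := by
    rw [eq_neg_of_add_eq_zero_left h]
    exact H.neg_mem hs
  have h5 : (2 * a + 1) • PP i = a • (PP i + PP i) + PP i := by
    rw [add_zsmul, one_zsmul, two_mul, add_zsmul, zsmul_add]
  rw [ha, h5] at h4
  exact h3 ((H.add_mem_cancel_left (H.zsmul_mem (h1 _) _)).1 h4)

lemma indep (n : Fin 11 → ℤ) (h : ∑ i, n i • PP i = 0) : n = 0 := by
  have key : ∀ N : ℕ, ∀ n : Fin 11 → ℤ, ∑ i, n i • PP i = 0 → ∀ i, ((2 : ℤ) ^ N) ∣ n i := by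
    intro N
    induction N with
    | zero => intro n _ i; simp
    | succ N ih =>
      intro n hn i
      choose m hm using fun i => indep_even n hn i
      have h2 : (∑ i, m i • PP i) + (∑ i, m i • PP i) = 0 := by
        rw [← Finset.sum_add_distrib, ← hn]
        refine Finset.sum_congr rfl fun i _ => ?_
        rw [hm i, add_zsmul]
      have := ih m (no_two_torsion _ h2) i
      rw [hm i, pow_succ, ← mul_two]
      exact mul_dvd_mul_right this 2
  funext i
  by_contra hne
  have h1 := Int.le_of_dvd (abs_pos.2 hne) ((dvd_abs _ _).2 (key (n i).natAbs n h i))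
  have h2 : (n i).natAbs < 2 ^ (n i).natAbs := Nat.lt_two_pow_self
  have h3 : ((n i).natAbs : ℤ) < 2 ^ (n i).natAbs := by exact_mod_cast h2
  rw [Int.natCast_natAbs] at h3
  linarith

lemma indep_inj (n m : Fin 11 → ℤ) (h : ∑ i, n i • PP i = ∑ i, m i • PP i) : n = m := by
  have : ∑ i, (n - m) i • PP i = 0 := by
    simp only [Pi.sub_apply, sub_zsmul, ← sub_eq_add_neg, Finset.sum_sub_distrib, h, sub_self]
  exact sub_eq_zero.1 (indep _ this)

/-- Bound for the size of the `X`-coordinate of a point. -/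
def Sz (P : EC.Point) (H : ℝ) : Prop :=
  ∀ x y h, P = WeierstrassCurve.Affine.Point.some x y h →
    ∃ p e : ℤ, e ≠ 0 ∧ x = (p : ℚ) / (e : ℚ) ^ 2 ∧ |(p : ℝ)| ≤ H ∧ (e : ℝ) ^ 2 ≤ H

lemma Sz.mono {P : EC.Point} {H H' : ℝ} (h : Sz P H) (hh : H ≤ H') : Sz P H' := by
  intro x y hxy hP
  obtain ⟨p, e, he, hx, h1, h2⟩ := h x y hxy hP
  exact ⟨p, e, he, hx, h1.trans hh, h2.trans hh⟩

lemma Sz_zero (H : ℝ) : Sz 0 H := by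
  intro x y h hP
  exact absurd hP.symm (WeierstrassCurve.Affine.Point.some_ne_zero h)

lemma rat_sq_int {r : ℚ} {n : ℤ} (h : r ^ 2 = n) : ∃ m : ℤ, r = m := by
  have h1 : ((r : ℝ)) ^ 2 = (n : ℝ) := by exact_mod_cast congrArg (fun q : ℚ => (q : ℝ)) h
  by_contra hc
  refine (irrational_nrt_of_notint_nrt 2 n h1 ?_ (by norm_num)) ⟨r, rfl⟩
  rintro ⟨y, hy⟩
  exact hc ⟨y, by exact_mod_cast hy⟩

/-- integrality of the `Y`-coordinate -/
lemma exists_r {p e : ℤ} (he : e ≠ 0) {y : ℚ}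
    (h : y ^ 2 = ((p : ℚ) / (e : ℚ) ^ 2) ^ 3 - 432 * (kk : ℚ) ^ 2) :
    ∃ r : ℤ, y = (r : ℚ) / (e : ℚ) ^ 3 ∧ r ^ 2 = p ^ 3 - 432 * kk ^ 2 * e ^ 6 := by
  have he' : (e : ℚ) ≠ 0 := by exact_mod_cast he
  have h1 : (y * (e : ℚ) ^ 3) ^ 2 = ((p ^ 3 - 432 * kk ^ 2 * e ^ 6 : ℤ) : ℚ) := by
    rw [mul_pow, h]
    push_cast
    field_simp
  obtain ⟨r, hr⟩ := rat_sq_int h1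
  refine ⟨r, ?_, ?_⟩
  · rw [← hr]
    field_simp
  · rw [hr] at h1
    exact_mod_cast h1

lemma r_bound {p e r : ℤ} {H : ℝ} (hr : r ^ 2 = p ^ 3 - 432 * kk ^ 2 * e ^ 6)
    (hp : |(p : ℝ)| ≤ H) (hH : 0 ≤ H) : (r : ℝ) ^ 2 ≤ H ^ 3 := by
  have h1 : (r : ℝ) ^ 2 = (p : ℝ) ^ 3 - 432 * (kk : ℝ) ^ 2 * (e : ℝ) ^ 6 := by exact_mod_cast hr
  have h2 : (p : ℝ) ^ 3 ≤ |(p : ℝ)| ^ 3 := by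
    rw [← abs_pow]; exact le_abs_self _
  have h3 : |(p : ℝ)| ^ 3 ≤ H ^ 3 := pow_le_pow_left₀ (abs_nonneg _) hp 3
  have h4 : (0 : ℝ) ≤ 432 * (kk : ℝ) ^ 2 * (e : ℝ) ^ 6 := by positivity
  linarith

lemma chord_id {p₁ p₂ e₁ e₂ r₁ r₂ K L w : ℚ} (he₁ : e₁ ≠ 0) (he₂ : e₂ ≠ 0) (hw0 : w ≠ 0)
    (hw : w = p₁ * e₂ ^ 2 - p₂ * e₁ ^ 2)
    (hr₁ : r₁ ^ 2 = p₁ ^ 3 - K * e₁ ^ 6) (hr₂ : r₂ ^ 2 = p₂ ^ 3 - K * e₂ ^ 6)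
    (hL : L * (p₁ / e₁ ^ 2 - p₂ / e₂ ^ 2) = r₁ / e₁ ^ 3 - r₂ / e₂ ^ 3) :
    L ^ 2 - p₁ / e₁ ^ 2 - p₂ / e₂ ^ 2 =
      (p₁ * p₂ * (p₁ * e₂ ^ 2 + p₂ * e₁ ^ 2) - 2 * K * e₁ ^ 4 * e₂ ^ 4
      - 2 * r₁ * r₂ * e₁ * e₂) / w ^ 2 := by
  have hL' : L = (r₁ * e₂ ^ 3 - r₂ * e₁ ^ 3) / (e₁ * e₂ * w) := by
    rw [eq_div_iff (by positivity), hw]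
    field_simp at hL
    linear_combination hL
  rw [hL']
  field_simp
  rw [hw]
  linear_combination e₂ ^ 6 * hr₁ + e₁ ^ 6 * hr₂

lemma abs_mul4 {H a b c d : ℝ} (hH : 0 ≤ H) (ha : |a| ≤ H) (hb : |b| ≤ H) (hc : |c| ≤ H)
    (hd : |d| ≤ H) : |a * b * c * d| ≤ H ^ 4 := by
  rw [abs_mul, abs_mul, abs_mul]
  calc |a| * |b| * |c| * |d| ≤ H * H * H * H := by gcongr
    _ = H ^ 4 := by ring

lemma chord_bd {p₁ p₂ e₁ e₂ r₁ r₂ K H : ℝ} (hH : 0 ≤ H) (hK0 : 0 ≤ K) (hK : K ≤ 10 ^ 53)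
    (hp₁ : |p₁| ≤ H) (hp₂ : |p₂| ≤ H) (he₁ : e₁ ^ 2 ≤ H) (he₂ : e₂ ^ 2 ≤ H)
    (b1 : r₁ ^ 2 ≤ H ^ 3) (b2 : r₂ ^ 2 ≤ H ^ 3) :
    |p₁ * p₂ * (p₁ * e₂ ^ 2 + p₂ * e₁ ^ 2) - 2 * K * e₁ ^ 4 * e₂ ^ 4 - 2 * r₁ * r₂ * e₁ * e₂|
      ≤ 10 ^ 54 * H ^ 4 := by
  have hE1 : |e₁ ^ 2| ≤ H := by rwa [abs_of_nonneg (by positivity)]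
  have hE2 : |e₂ ^ 2| ≤ H := by rwa [abs_of_nonneg (by positivity)]
  have t1 := abs_mul4 hH hp₁ hp₂ hp₁ hE2
  have t2 := abs_mul4 hH hp₁ hp₂ hp₂ hE1
  have t3 := abs_mul4 hH hE1 hE1 hE2 hE2
  have t4 : |r₁ * r₂ * e₁ * e₂| ≤ H ^ 4 := by
    apply abs_le_of_sq_le_sq _ (by positivity)
    calc (r₁ * r₂ * e₁ * e₂) ^ 2
        = (r₁ ^ 2 * r₂ ^ 2) * (e₁ ^ 2 * e₂ ^ 2) := by ring
      _ ≤ (H ^ 3 * H ^ 3) * (H * H) := by gcongr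
      _ = (H ^ 4) ^ 2 := by ring
  have t3' : |K * (e₁ ^ 2 * e₁ ^ 2 * e₂ ^ 2 * e₂ ^ 2)| ≤ 10 ^ 53 * H ^ 4 := by
    rw [abs_mul, abs_of_nonneg hK0]
    gcongr
  have hH4 : (0 : ℝ) ≤ H ^ 4 := by positivity
  have e : p₁ * p₂ * (p₁ * e₂ ^ 2 + p₂ * e₁ ^ 2) - 2 * K * e₁ ^ 4 * e₂ ^ 4
      - 2 * r₁ * r₂ * e₁ * e₂ = p₁ * p₂ * p₁ * e₂ ^ 2 + p₁ * p₂ * p₂ * e₁ ^ 2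
      - 2 * (K * (e₁ ^ 2 * e₁ ^ 2 * e₂ ^ 2 * e₂ ^ 2)) - 2 * (r₁ * r₂ * e₁ * e₂) := by ring
  rw [e]
  rw [abs_le] at t1 t2 t3' t4 ⊢
  obtain ⟨a1, a2⟩ := t1
  obtain ⟨a3, a4⟩ := t2
  obtain ⟨a5, a6⟩ := t3'
  obtain ⟨a7, a8⟩ := t4
  generalize p₁ * p₂ * p₁ * e₂ ^ 2 = z1 at *
  generalize p₁ * p₂ * p₂ * e₁ ^ 2 = z2 at *
  generalize K * (e₁ ^ 2 * e₁ ^ 2 * e₂ ^ 2 * e₂ ^ 2) = z3 at *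
  generalize r₁ * r₂ * e₁ * e₂ = z4 at *
  generalize H ^ 4 = z5 at *
  constructor <;> linarith

lemma dbl_id {p e r K L : ℚ} (he : e ≠ 0) (hr0 : r ≠ 0) (hr : r ^ 2 = p ^ 3 - K * e ^ 6)
    (hL : L * (2 * (r / e ^ 3)) = 3 * (p / e ^ 2) ^ 2) :
    L ^ 2 - p / e ^ 2 - p / e ^ 2 = (p ^ 4 + 8 * K * p * e ^ 6) / (2 * r * e) ^ 2 := by
  have hL' : L = 3 * p ^ 2 / (2 * r * e) := by
    rw [eq_div_iff (by positivity)]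
    field_simp at hL
    linear_combination hL
  rw [hL']
  field_simp
  linear_combination (-8 * p) * hr

lemma dbl_bd {p e K H : ℝ} (hH : 0 ≤ H) (hK0 : 0 ≤ K) (hK : 1 + 8 * K ≤ 10 ^ 54)
    (hp : |p| ≤ H) (he : e ^ 2 ≤ H) :
    |p ^ 4 + 8 * K * p * e ^ 6| ≤ 10 ^ 54 * H ^ 4 := by
  have hE1 : |e ^ 2| ≤ H := by rwa [abs_of_nonneg (by positivity)]
  have t1 := abs_mul4 hH hp hp hp hp
  have t3 := abs_mul4 hH hp hE1 hE1 hE1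
  have hH4 : (0 : ℝ) ≤ H ^ 4 := by positivity
  have e1 : p ^ 4 + 8 * K * p * e ^ 6 = p * p * p * p + 8 * K * (p * e ^ 2 * e ^ 2 * e ^ 2) := by
    ring
  rw [e1]
  calc _ ≤ |p * p * p * p| + |8 * K * (p * e ^ 2 * e ^ 2 * e ^ 2)| := abs_add_le _ _
    _ = |p * p * p * p| + 8 * K * |p * e ^ 2 * e ^ 2 * e ^ 2| := by
        rw [abs_mul (8 * K), abs_of_nonneg (by positivity : 0 ≤ 8 * K)]
    _ ≤ H ^ 4 + 8 * K * H ^ 4 := by gcongr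
    _ = (1 + 8 * K) * H ^ 4 := by ring
    _ ≤ _ := by gcongr

lemma chord_den {p₁ p₂ e₁ e₂ H : ℝ} (hH : 0 ≤ H)
    (hp₁ : |p₁| ≤ H) (hp₂ : |p₂| ≤ H) (he₁ : e₁ ^ 2 ≤ H) (he₂ : e₂ ^ 2 ≤ H) :
    (p₁ * e₂ ^ 2 - p₂ * e₁ ^ 2) ^ 2 ≤ 10 ^ 54 * H ^ 4 := by
  have s1 : |p₁ * e₂ ^ 2| ≤ H * H := by
    rw [abs_mul, abs_of_nonneg (sq_nonneg e₂)]; gcongr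
  have s2 : |p₂ * e₁ ^ 2| ≤ H * H := by
    rw [abs_mul, abs_of_nonneg (sq_nonneg e₁)]; gcongr
  have s3 : |p₁ * e₂ ^ 2 - p₂ * e₁ ^ 2| ≤ 2 * H ^ 2 := by
    calc _ ≤ |p₁ * e₂ ^ 2| + |p₂ * e₁ ^ 2| := abs_sub _ _
      _ ≤ H * H + H * H := by gcongr
      _ = _ := by ring
  rw [← sq_abs]
  calc _ ≤ (2 * H ^ 2) ^ 2 := pow_le_pow_left₀ (abs_nonneg _) s3 2
    _ = 4 * H ^ 4 := by ring
    _ ≤ _ := by gcongr; norm_num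

lemma Sz_add {P Q : EC.Point} {H : ℝ} (hH : 1 ≤ H) (hP : Sz P H) (hQ : Sz Q H) :
    Sz (P + Q) (10 ^ 54 * H ^ 4) := by
  have hH0 : (0 : ℝ) ≤ H := by linarith
  have hmono : H ≤ 10 ^ 54 * H ^ 4 := by
    have h1 : H ≤ H ^ 4 := le_self_pow₀ hH (by norm_num)
    have h2 : (0 : ℝ) ≤ H ^ 4 := by positivity
    linarith
  rcases P with _ | ⟨x₁, y₁, h₁⟩
  · change Sz (0 + Q) _
    rw [zero_add]
    exact hQ.mono hmono
  rcases Q with _ | ⟨x₂, y₂, h₂⟩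
  · change Sz (_ + 0) _
    rw [add_zero]
    exact hP.mono hmono
  obtain ⟨p₁, e₁, he₁, hx₁, hp₁, hee₁⟩ := hP _ _ _ rfl
  obtain ⟨p₂, e₂, he₂, hx₂, hp₂, hee₂⟩ := hQ _ _ _ rfl
  have q1 := EC_equation.1 h₁.1
  have q2 := EC_equation.1 h₂.1
  rcases add_cases h₁ h₂ with ⟨-, h⟩ | ⟨L, y₃, h₃, h, hL⟩
  · rw [h]
    exact Sz_zero _
  rw [h]
  intro x y hxy hs
  have hx : L ^ 2 - x₁ - x₂ = x := by injection hs
  have he₁' : (e₁ : ℚ) ≠ 0 := by exact_mod_cast he₁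
  have he₂' : (e₂ : ℚ) ≠ 0 := by exact_mod_cast he₂
  rw [hx₁] at q1
  rw [hx₂] at q2
  obtain ⟨r₁, hy₁, hr₁⟩ := exists_r he₁ q1
  obtain ⟨r₂, hy₂, hr₂⟩ := exists_r he₂ q2
  have b1 := r_bound hr₁ hp₁ hH0
  have b2 := r_bound hr₂ hp₂ hH0
  obtain ⟨K, hK⟩ : ∃ K : ℤ, K = 432 * kk ^ 2 := ⟨_, rfl⟩
  have hk : (K : ℝ) ≤ 10 ^ 53 := by rw [hK]; norm_num [kk]
  have hk' : 1 + 8 * (K : ℝ) ≤ 10 ^ 54 := by rw [hK]; norm_num [kk]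
  have hk0 : (0 : ℝ) ≤ K := by rw [hK]; norm_num [kk]
  rw [← hK] at hr₁ hr₂
  have hr₁' : (r₁ : ℚ) ^ 2 = (p₁ : ℚ) ^ 3 - (K : ℚ) * (e₁ : ℚ) ^ 6 := by
    exact_mod_cast hr₁
  have hr₂' : (r₂ : ℚ) ^ 2 = (p₂ : ℚ) ^ 3 - (K : ℚ) * (e₂ : ℚ) ^ 6 := by
    exact_mod_cast hr₂
  rcases hL with ⟨hne, hL⟩ | ⟨hxx, hyy, hy0, hL⟩
  · have hd2 : (p₁ : ℚ) * (e₂ : ℚ) ^ 2 - p₂ * (e₁ : ℚ) ^ 2 ≠ 0 := by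
      intro h0
      apply hne
      rw [hx₁, hx₂, div_eq_div_iff (by positivity) (by positivity)]
      linarith
    refine ⟨p₁ * p₂ * (p₁ * e₂ ^ 2 + p₂ * e₁ ^ 2) - 2 * K * e₁ ^ 4 * e₂ ^ 4
      - 2 * r₁ * r₂ * e₁ * e₂, p₁ * e₂ ^ 2 - p₂ * e₁ ^ 2, ?_, ?_, ?_, ?_⟩
    · exact_mod_cast hd2
    · rw [hx₁, hx₂, hy₁, hy₂] at hL
      rw [← hx, hx₁, hx₂, chord_id he₁' he₂' hd2 rfl hr₁' hr₂' hL]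
      push_cast
      rfl
    · push_cast
      exact chord_bd hH0 hk0 hk hp₁ hp₂ hee₁ hee₂ b1 b2
    · push_cast
      exact chord_den hH0 hp₁ hp₂ hee₁ hee₂
  · have hr0 : r₁ ≠ 0 := by
      rintro rfl
      apply hy0
      rw [hy₁]; simp
    have hr0' : (r₁ : ℚ) ≠ 0 := by exact_mod_cast hr0
    refine ⟨p₁ ^ 4 + 8 * K * p₁ * e₁ ^ 6, 2 * r₁ * e₁, ?_, ?_, ?_, ?_⟩
    · simp [hr0, he₁]
    · rw [hx₁, hy₁] at hL
      rw [← hx, ← hxx, hx₁, dbl_id he₁' hr0' hr₁' hL]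
      push_cast
      rfl
    · push_cast
      exact dbl_bd hH0 hk0 hk' hp₁ hee₁
    · push_cast
      calc (2 * (r₁ : ℝ) * e₁) ^ 2 = 4 * ((r₁ : ℝ) ^ 2 * (e₁ : ℝ) ^ 2) := by ring
        _ ≤ 4 * (H ^ 3 * H) := by gcongr
        _ = 4 * H ^ 4 := by ring
        _ ≤ _ := by gcongr; norm_num

/-- Logarithmic version of `Sz`. -/
def BB (P : EC.Point) (j : ℕ) : Prop := Sz P (10 ^ j / 10 ^ 18)

lemma BB_mono {P : EC.Point} {i j : ℕ} (h : BB P i) (hij : i ≤ j) : BB P j := by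
  refine Sz.mono h ?_
  gcongr
  norm_num

lemma BB_add {P Q : EC.Point} {j : ℕ} (hj : 18 ≤ j) (hP : BB P j) (hQ : BB Q j) :
    BB (P + Q) (j * 4) := by
  have h1 : (1 : ℝ) ≤ 10 ^ j / 10 ^ 18 := by
    rw [one_le_div (by positivity)]
    gcongr
    norm_num
  have h := Sz_add h1 hP hQ
  have h2 : (10 : ℝ) ^ 54 * (10 ^ j / 10 ^ 18) ^ 4 = 10 ^ (j * 4) / 10 ^ 18 := by
    rw [div_pow, ← pow_mul, ← pow_mul]
    field_simp
  rw [h2] at h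
  exact h

lemma BB_zero (j : ℕ) : BB 0 j := Sz_zero _

lemma BB_PP (i : Fin 11) : BB (PP i) 42 := by
  intro x y h hP
  have hx : (XX i : ℚ) / (DD i : ℚ) ^ 2 = x := by
    unfold PP at hP
    injection hP
  refine ⟨XX i, DD i, DD_ne i, hx.symm, ?_, ?_⟩
  · have : |XX i| ≤ 10 ^ 24 := by
      fin_cases i <;> norm_num [XX]
    have h2 : |(XX i : ℝ)| ≤ 10 ^ 24 := by exact_mod_cast this
    exact h2.trans (by norm_num)
  · have : (DD i) ^ 2 ≤ 10 ^ 24 := by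
      fin_cases i <;> norm_num [DD]
    have h2 : (DD i : ℝ) ^ 2 ≤ 10 ^ 24 := by exact_mod_cast this
    exact h2.trans (by norm_num)

lemma BB_subset (m : ℕ) : ∀ s : Finset (Fin 11), s.card ≤ 2 ^ m →
    BB (∑ i ∈ s, PP i) (42 * 4 ^ m) := by
  induction m with
  | zero =>
    intro s hs
    rcases Nat.le_one_iff_eq_zero_or_eq_one.1 (by simpa using hs) with h | h
    · rw [Finset.card_eq_zero.1 h, Finset.sum_empty]
      exact BB_zero _
    · obtain ⟨i, rfl⟩ := Finset.card_eq_one.1 h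
      rw [Finset.sum_singleton]
      exact BB_PP i
  | succ m ih =>
    intro s hs
    have h18 : 18 ≤ 42 * 4 ^ m := by
      have : 1 ≤ 4 ^ m := Nat.one_le_pow _ _ (by norm_num)
      omega
    obtain ⟨t, hts, ht⟩ := Finset.exists_subset_card_eq (s := s) (n := s.card / 2) (by omega)
    have h1 := Finset.card_sdiff_add_card_eq_card hts
    have e : 42 * 4 ^ (m + 1) = 42 * 4 ^ m * 4 := by ring
    rw [e, ← Finset.sum_sdiff hts]
    rw [pow_succ] at hs
    exact BB_add h18 (ih _ (by omega)) (ih _ (by omega))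

lemma BB_box (k : ℕ) : ∀ n : Fin 11 → ℤ, (∀ i, 0 ≤ n i) → (∀ i, n i ≤ 2 ^ k) →
    BB (∑ i, n i • PP i) (10752 * 4 ^ k) := by
  induction k with
  | zero =>
    intro n h0 h1
    have h2 : ∑ i, n i • PP i = ∑ i ∈ Finset.univ.filter (fun i => n i = 1), PP i := by
      rw [Finset.sum_filter]
      refine Finset.sum_congr rfl fun i _ => ?_
      split_ifs with h
      · rw [h, one_zsmul]
      · have : n i = 0 := by
          have := h0 i
          have := h1 i
          simp only [pow_zero] at this
          omega
        rw [this, zero_zsmul]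
    rw [h2]
    refine BB_subset 4 _ ?_
    refine (Finset.card_le_univ _).trans ?_
    simp
  | succ k ih =>
    intro n h0 h1
    have h18 : 18 ≤ 10752 * 4 ^ k := by
      have : 1 ≤ 4 ^ k := Nat.one_le_pow _ _ (by norm_num)
      omega
    have e : 10752 * 4 ^ (k + 1) = 10752 * 4 ^ k * 4 := by ring
    have h2 : ∑ i, n i • PP i = ∑ i, (n i / 2) • PP i + ∑ i, (n i - n i / 2) • PP i := by
      rw [← Finset.sum_add_distrib]
      refine Finset.sum_congr rfl fun i _ => ?_
      rw [← add_zsmul]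
      congr 1
      ring
    rw [e, h2]
    refine BB_add h18 (ih _ ?_ ?_) (ih _ ?_ ?_) <;> intro i <;> have a := h0 i <;>
      have b := h1 i <;> rw [pow_succ] at b <;> omega

/-- From points on the curve to rational solutions of `x³ + y³ = k`. -/
lemma pt {P : EC.Point} {j : ℕ} (hP : P ≠ 0) (h : BB P j) :
    ∃ (D : ℕ) (x y : ℚ) (a b : ℤ), 2 ≤ D ∧ (D : ℝ) ≤ 10 ^ (2 * j) ∧ x ^ 3 + y ^ 3 = (kk : ℚ) ∧
      (D : ℚ) * x = a ∧ (D : ℚ) * y = b ∧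
      ∃ h, P = .some (12 * (kk : ℚ) / (x + y)) (36 * (kk : ℚ) * (x - y) / (x + y)) h := by
  rcases P with _ | ⟨X, Y, hXY⟩
  · exact absurd rfl hP
  obtain ⟨p, e, he, hX, hp, hee⟩ := h _ _ _ rfl
  have q := EC_equation.1 hXY.1
  rw [hX] at q
  obtain ⟨r, hY, hr⟩ := exists_r he q
  rw [← hX] at q
  have hk0 : (kk : ℚ) ≠ 0 := by norm_num [kk]
  have hX0 : X ≠ 0 := by
    rintro rfl
    have : (0 : ℚ) < 432 * (kk : ℚ) ^ 2 := by positivity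
    nlinarith [sq_nonneg Y]
  have he' : (e : ℚ) ≠ 0 := by exact_mod_cast he
  have hp0 : p ≠ 0 := by
    rintro rfl
    simp at hX
    exact hX0 hX
  have hp0' : (p : ℚ) ≠ 0 := by exact_mod_cast hp0
  generalize kk = k at *
  have hs : (36 * (k : ℚ) + Y) / (6 * X) + (36 * (k : ℚ) - Y) / (6 * X) = 12 * k / X := by
    field_simp
    ring
  have hd : (36 * (k : ℚ) + Y) / (6 * X) - (36 * (k : ℚ) - Y) / (6 * X) = Y / (3 * X) := by
    field_simp
    ring
  have hintg : ∀ z : ℤ, ∃ a : ℤ, (((6 * p * e).natAbs : ℕ) : ℚ) * ((z : ℚ) / (6 * p * e)) = a := by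
    intro z
    have h6 : (6 * (p : ℚ) * e) ≠ 0 := by positivity
    rw [Nat.cast_natAbs]
    rcases abs_choice (6 * p * e) with h | h
    · refine ⟨z, ?_⟩
      rw [h]
      push_cast
      field_simp
    · refine ⟨-z, ?_⟩
      rw [h]
      push_cast
      field_simp
  have hx : (36 * (k : ℚ) + Y) / (6 * X) = ((36 * k * e ^ 3 + r : ℤ) : ℚ) / (6 * p * e) := by
    rw [hX, hY]
    push_cast
    field_simp
  have hy : (36 * (k : ℚ) - Y) / (6 * X) = ((36 * k * e ^ 3 - r : ℤ) : ℚ) / (6 * p * e) := by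
    rw [hX, hY]
    push_cast
    field_simp
  obtain ⟨a, ha⟩ := hintg (36 * k * e ^ 3 + r)
  obtain ⟨b, hb⟩ := hintg (36 * k * e ^ 3 - r)
  refine ⟨(6 * p * e).natAbs, (36 * (k : ℚ) + Y) / (6 * X), (36 * (k : ℚ) - Y) / (6 * X), a, b,
    ?_, ?_, ?_, ?_, ?_, ?_⟩
  · rw [Int.natAbs_mul, Int.natAbs_mul]
    have h1 : 1 ≤ p.natAbs := Int.natAbs_pos.2 hp0
    have h2 : 1 ≤ e.natAbs := Int.natAbs_pos.2 he
    have h3 : 1 ≤ p.natAbs * e.natAbs := Nat.mul_pos h1 h2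
    have h4 : (6 : ℤ).natAbs = 6 := rfl
    rw [h4, mul_assoc]
    omega
  · have he1 : |(e : ℝ)| ≤ (e : ℝ) ^ 2 := by
      rw [← sq_abs]
      have : (1 : ℝ) ≤ |(e : ℝ)| := by exact_mod_cast Int.one_le_abs he
      nlinarith
    rw [Nat.cast_natAbs]
    push_cast
    rw [abs_mul, abs_mul]
    have h6 : |(6 : ℝ)| = 6 := by norm_num
    rw [h6]
    calc 6 * |(p : ℝ)| * |(e : ℝ)| ≤ 6 * (10 ^ j / 10 ^ 18) * (10 ^ j / 10 ^ 18) := by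
          gcongr
          exact he1.trans hee
      _ = 10 ^ (2 * j) * (6 / 10 ^ 36) := by ring
      _ ≤ 10 ^ (2 * j) * 1 := by
          gcongr
          norm_num
      _ = _ := mul_one _
  · have : X ^ 3 = Y ^ 2 + 432 * (k : ℚ) ^ 2 := by linarith
    field_simp
    rw [this]
    ring
  · rw [hx, ha]
  · rw [hy, hb]
  · rw [hs, hd]
    have e1 : 12 * (k : ℚ) / (12 * k / X) = X := by field_simp
    have e2 : 36 * (k : ℚ) * (Y / (3 * X)) / (12 * k / X) = Y := by
      field_simp
      ring
    rw [e1, e2]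
    exact ⟨hXY, rfl⟩

lemma finite_sols {m : ℤ} (hm : m ≠ 0) : {p : ℤ × ℤ | p.1 ^ 3 + p.2 ^ 3 = m}.Finite := by
  refine (Set.finite_Icc ((-2 * |m|, -2 * |m|) : ℤ × ℤ) (2 * |m|, 2 * |m|)).subset ?_
  rintro ⟨x, y⟩ (h : x ^ 3 + y ^ 3 = m)
  have hdvd : x ^ 2 - x * y + y ^ 2 ∣ m := ⟨x + y, by rw [← h]; ring⟩
  have hle : x ^ 2 - x * y + y ^ 2 ≤ |m| :=
    Int.le_of_dvd (abs_pos.2 hm) ((dvd_abs _ _).2 hdvd)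
  have hm1 : 1 ≤ |m| := Int.one_le_abs hm
  have hx : |x| ≤ 2 * |m| := by
    apply abs_le_of_sq_le_sq _ (by positivity)
    nlinarith [sq_nonneg (x - 2 * y)]
  have hy : |y| ≤ 2 * |m| := by
    apply abs_le_of_sq_le_sq _ (by positivity)
    nlinarith [sq_nonneg (y - 2 * x)]
  rw [abs_le] at hx hy
  simp only [Set.mem_Icc, Prod.mk_le_mk]
  refine ⟨⟨?_, ?_⟩, ?_, ?_⟩ <;> linarith [hx.1, hx.2, hy.1, hy.2]

lemma count {ι : Type*} [DecidableEq ι] (S : Finset ι) (D : ι → ℕ) (x y : ι → ℚ) (a b : ι → ℤ)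
    (hD : ∀ i ∈ S, D i ≠ 0) (hxy : ∀ i ∈ S, x i ^ 3 + y i ^ 3 = (kk : ℚ))
    (ha : ∀ i ∈ S, (D i : ℚ) * x i = a i) (hb : ∀ i ∈ S, (D i : ℚ) * y i = b i)
    (hinj : ∀ i ∈ S, ∀ j ∈ S, x i = x j → y i = y j → i = j) :
    S.card ≤ Nf (kk * ((∏ i ∈ S, D i : ℕ) : ℤ) ^ 3) := by
  have hM : (∏ i ∈ S, D i) ≠ 0 := Finset.prod_ne_zero_iff.2 hD
  have hM' : ((∏ i ∈ S, D i : ℕ) : ℤ) ≠ 0 := by exact_mod_cast hM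
  have hMq : ((∏ i ∈ S, D i : ℕ) : ℚ) ≠ 0 := by exact_mod_cast hM
  have hm : kk * ((∏ i ∈ S, D i : ℕ) : ℤ) ^ 3 ≠ 0 :=
    mul_ne_zero (by norm_num [kk]) (pow_ne_zero _ hM')
  have hsplit : ∀ i ∈ S, ((∏ i ∈ S, D i : ℕ) : ℚ) = (∏ l ∈ S.erase i, D l : ℕ) * (D i : ℚ) := by
    intro i hi
    rw [← Finset.prod_erase_mul S D hi]
    push_cast
    rfl
  have hxi : ∀ i ∈ S, (((∏ l ∈ S.erase i, D l : ℕ) * a i : ℤ) : ℚ)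
      = ((∏ i ∈ S, D i : ℕ) : ℚ) * x i := by
    intro i hi
    rw [hsplit i hi, mul_assoc, ha i hi]
    push_cast
    rfl
  have hyi : ∀ i ∈ S, (((∏ l ∈ S.erase i, D l : ℕ) * b i : ℤ) : ℚ)
      = ((∏ i ∈ S, D i : ℕ) : ℚ) * y i := by
    intro i hi
    rw [hsplit i hi, mul_assoc, hb i hi]
    push_cast
    rfl
  unfold Nf
  rw [← Set.ncard_coe_finset S]
  refine Set.ncard_le_ncard_of_injOn
    (fun i => (((∏ l ∈ S.erase i, D l : ℕ) * a i : ℤ), ((∏ l ∈ S.erase i, D l : ℕ) * b i : ℤ)))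
    ?_ ?_ (finite_sols hm)
  · intro i hi
    have hi' : i ∈ S := hi
    have key : (((((∏ l ∈ S.erase i, D l : ℕ) * a i : ℤ) ^ 3
        + ((∏ l ∈ S.erase i, D l : ℕ) * b i : ℤ) ^ 3 : ℤ)) : ℚ)
        = ((kk * ((∏ i ∈ S, D i : ℕ) : ℤ) ^ 3 : ℤ) : ℚ) := by
      rw [Int.cast_add, Int.cast_pow, Int.cast_pow, hxi i hi', hyi i hi', Int.cast_mul,
        ← hxy i hi', Int.cast_pow, Int.cast_natCast]
      ring
    exact Int.cast_injective key
  · intro i hi j hj hij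
    have hi' : i ∈ S := hi
    have hj' : j ∈ S := hj
    have h1' := congrArg (fun z : ℤ × ℤ => (z.1 : ℚ)) hij
    have h2' := congrArg (fun z : ℤ × ℤ => (z.2 : ℚ)) hij
    beta_reduce at h1' h2'
    rw [hxi i hi', hxi j hj'] at h1'
    rw [hyi i hi', hyi j hj'] at h2'
    exact hinj i hi' j hj' (mul_left_cancel₀ hMq h1') (mul_left_cancel₀ hMq h2')

lemma exists_m (k : ℕ) : ∃ m : ℤ, ∃ s : ℕ, s + 1 = (2 ^ k + 1) ^ 11 ∧ s ≤ Nf m ∧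
    (2 : ℝ) ^ s ≤ (m : ℝ) ∧ (m : ℝ) ≤ 10 ^ 26 * ((10 ^ (2 * (10752 * 4 ^ k))) ^ s) ^ 3 := by
  classical
  set T : Finset (Fin 11 → ℤ) := Fintype.piFinset (fun _ => Finset.Icc (0 : ℤ) (2 ^ k)) with hT
  set S : Finset (Fin 11 → ℤ) := T.erase 0 with hS
  have h0T : (0 : Fin 11 → ℤ) ∈ T := by
    rw [hT, Fintype.mem_piFinset]
    intro i
    simp
  have hcard : S.card + 1 = (2 ^ k + 1) ^ 11 := by
    rw [hS, Finset.card_erase_add_one h0T, hT, Fintype.card_piFinset]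
    simp only [Int.card_Icc, Finset.prod_const, Finset.card_univ, Fintype.card_fin]
    have : (2 : ℤ) ^ k + 1 - 0 = ((2 ^ k + 1 : ℕ) : ℤ) := by push_cast; ring
    rw [this, Int.toNat_natCast]
  have hpt : ∀ n : Fin 11 → ℤ, ∃ (D : ℕ) (x y : ℚ) (a b : ℤ), n ∈ S →
      (2 ≤ D ∧ (D : ℝ) ≤ 10 ^ (2 * (10752 * 4 ^ k)) ∧
      x ^ 3 + y ^ 3 = (kk : ℚ) ∧ (D : ℚ) * x = a ∧ (D : ℚ) * y = b ∧
      ∃ h, ∑ i, n i • PP i =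
        .some (12 * (kk : ℚ) / (x + y)) (36 * (kk : ℚ) * (x - y) / (x + y)) h) := by
    intro n
    by_cases hn : n ∈ S
    · have hn' := Finset.mem_erase.1 hn
      have hb := Fintype.mem_piFinset.1 hn'.2
      have hP : ∑ i, n i • PP i ≠ 0 := fun h => hn'.1 (indep n h)
      have hB := BB_box k n (fun i => (Finset.mem_Icc.1 (hb i)).1)
        (fun i => (Finset.mem_Icc.1 (hb i)).2)
      obtain ⟨D, x, y, a, b, h⟩ := pt hP hB
      exact ⟨D, x, y, a, b, fun _ => h⟩
    · exact ⟨0, 0, 0, 0, 0, fun h => absurd h hn⟩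
  choose D x y a b h using hpt
  have hc := count S D x y a b (fun i hi => by have := (h i hi).1; omega)
    (fun i hi => (h i hi).2.2.1) (fun i hi => (h i hi).2.2.2.1) (fun i hi => (h i hi).2.2.2.2.1)
    (by
      intro i hi j hj hx hy
      obtain ⟨h1, e1⟩ := (h i hi).2.2.2.2.2
      obtain ⟨h2, e2⟩ := (h j hj).2.2.2.2.2
      apply indep_inj
      rw [e1, e2]
      congr 2 <;> rw [hx, hy])
  refine ⟨_, S.card, hcard, hc, ?_, ?_⟩
  · have h1 : 2 ^ S.card ≤ ∏ i ∈ S, D i := Finset.pow_card_le_prod _ _ _ (fun i hi => (h i hi).1)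
    have h2 : ∏ i ∈ S, D i ≤ (∏ i ∈ S, D i) ^ 3 := Nat.le_self_pow (by norm_num) _
    have h3 : (2 : ℤ) ^ S.card ≤ ((∏ i ∈ S, D i : ℕ) : ℤ) ^ 3 := by exact_mod_cast h1.trans h2
    have h4 : (2 : ℤ) ^ S.card ≤ kk * ((∏ i ∈ S, D i : ℕ) : ℤ) ^ 3 := by
      refine h3.trans ?_
      have h5 : (0 : ℤ) ≤ ((∏ i ∈ S, D i : ℕ) : ℤ) ^ 3 := by positivity
      exact le_mul_of_one_le_left h5 (by norm_num [kk])
    exact_mod_cast h4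
  · have h1 : ((∏ i ∈ S, D i : ℕ) : ℝ) ≤ (10 ^ (2 * (10752 * 4 ^ k))) ^ S.card := by
      rw [Nat.cast_prod]
      rw [← Finset.prod_const]
      exact Finset.prod_le_prod (fun i _ => by positivity) (fun i hi => (h i hi).2.1)
    rw [Int.cast_mul, Int.cast_pow, Int.cast_natCast]
    have hk : ((kk : ℤ) : ℝ) ≤ 10 ^ 26 := by norm_num [kk]
    gcongr

lemma log_ten_le : Real.log 10 ≤ 3 := by
  have h1 : Real.log 10 ≤ Real.log (2 ^ 4) := Real.log_le_log (by norm_num) (by norm_num)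
  rw [Real.log_pow] at h1
  have := Real.log_two_lt_d9
  push_cast at h1
  linarith

lemma final_ineq {N L : ℝ} (hN : 1 ≤ N) (hL0 : 0 ≤ L) (hL : L ≤ 10 ^ 6 * N ^ 13) :
    4.2e-6 * L ^ ((11 : ℝ) / 13) < N ^ 11 := by
  have hN0 : 0 ≤ N := by linarith
  have h1 : L ^ ((11 : ℝ) / 13) ≤ (10 ^ 6 * N ^ 13) ^ ((11 : ℝ) / 13) :=
    Real.rpow_le_rpow hL0 hL (by norm_num)
  have h2 : ((10 : ℝ) ^ 6 * N ^ 13) ≤ (2 * 10 ^ 5 * N ^ 11) ^ ((13 : ℝ) / 11) := by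
    have h3 : (10 ^ 6 * N ^ 13) ^ 11 ≤ (2 * 10 ^ 5 * N ^ 11) ^ 13 := by
      have e1 : (10 ^ 6 * N ^ 13) ^ 11 = 10 ^ 66 * N ^ 143 := by ring
      have e2 : (2 * 10 ^ 5 * N ^ 11) ^ 13 = (2 * 10 ^ 5) ^ 13 * N ^ 143 := by ring
      rw [e1, e2]
      gcongr
      norm_num
    have h4 : (10 : ℝ) ^ 6 * N ^ 13 = ((10 ^ 6 * N ^ 13) ^ 11) ^ ((1 : ℝ) / 11) := by
      rw [← Real.rpow_natCast (10 ^ 6 * N ^ 13) 11, ← Real.rpow_mul (by positivity)]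
      norm_num
    have h5 : (2 * 10 ^ 5 * N ^ 11) ^ ((13 : ℝ) / 11)
        = ((2 * 10 ^ 5 * N ^ 11) ^ 13) ^ ((1 : ℝ) / 11) := by
      rw [← Real.rpow_natCast (2 * 10 ^ 5 * N ^ 11) 13, ← Real.rpow_mul (by positivity)]
      norm_num
    rw [h4, h5]
    exact Real.rpow_le_rpow (by positivity) h3 (by norm_num)
  have h6 : (10 ^ 6 * N ^ 13) ^ ((11 : ℝ) / 13) ≤ 2 * 10 ^ 5 * N ^ 11 := by
    calc _ ≤ ((2 * 10 ^ 5 * N ^ 11) ^ ((13 : ℝ) / 11)) ^ ((11 : ℝ) / 13) :=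
          Real.rpow_le_rpow (by positivity) h2 (by norm_num)
      _ = _ := by
          rw [← Real.rpow_mul (by positivity)]
          norm_num
  have h7 : 0 < N ^ 11 := by positivity
  have h8 : L ^ ((11 : ℝ) / 13) ≤ 2 * 10 ^ 5 * N ^ 11 := h1.trans h6
  linarith

theorem stmt_1 : ∀ B : ℝ, ∃ m : ℤ, B < |(m : ℝ)| ∧
    4.2e-6 * Real.log |(m : ℝ)| ^ ((11 : ℝ) / 13) < (Nf m : ℝ) := by
  intro B
  obtain ⟨k0, hk0⟩ := exists_nat_gt B
  obtain ⟨k, hkk0, hk10⟩ : ∃ k : ℕ, k0 ≤ k ∧ 10 ≤ k := ⟨max k0 10, le_max_left _ _, le_max_right _ _⟩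
  obtain ⟨m, s, hs, hNf, hlow, hup⟩ := exists_m k
  have hm1 : (1 : ℝ) ≤ m := (one_le_pow₀ (by norm_num)).trans hlow
  have hm0 : (0 : ℝ) < m := by linarith
  refine ⟨m, ?_⟩
  rw [abs_of_pos hm0]
  have hN4 : (4 : ℝ) ^ k = (2 ^ k) ^ 2 := by
    rw [← pow_mul, mul_comm, pow_mul]
    norm_num
  have hN : (1024 : ℝ) ≤ 2 ^ k := by
    calc (1024 : ℝ) = 2 ^ 10 := by norm_num
      _ ≤ 2 ^ k := by gcongr; norm_num
  have hsR : (s : ℝ) + 1 = (2 ^ k + 1) ^ 11 := by exact_mod_cast hs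
  have hslow : ((2 : ℝ) ^ k) ^ 11 ≤ s := by
    have : (2 ^ k) ^ 11 < (2 ^ k + 1) ^ 11 := Nat.pow_lt_pow_left (Nat.lt_succ_self _) (by norm_num)
    have h2 : (2 ^ k) ^ 11 ≤ s := by omega
    exact_mod_cast h2
  have hks : k < 2 ^ s := by
    have h1 : k < 2 ^ k := Nat.lt_two_pow_self
    have h2 : k ≤ s := by
      have h3 : 2 ^ k ≤ (2 ^ k) ^ 11 := Nat.le_self_pow (by norm_num) _
      have h4 : (2 ^ k) ^ 11 ≤ s := by exact_mod_cast hslow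
      omega
    exact h1.trans_le (Nat.pow_le_pow_right (by norm_num) h2)
  refine ⟨?_, ?_⟩
  · calc B < k0 := hk0
      _ ≤ k := by exact_mod_cast hkk0
      _ ≤ (2 : ℝ) ^ s := by exact_mod_cast hks.le
      _ ≤ m := hlow
  · have hlog : Real.log m ≤ 26 * Real.log 10 +
        3 * (s * ((2 * (10752 * 4 ^ k)) * Real.log 10)) := by
      have := Real.log_le_log hm0 hup
      rw [Real.log_mul (by positivity) (by positivity), Real.log_pow, Real.log_pow, Real.log_pow,
        Real.log_pow] at this
      push_cast at this
      exact this
    have hl0 : 0 ≤ Real.log 10 := Real.log_nonneg (by norm_num)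
    have hL0 : 0 ≤ Real.log m := Real.log_nonneg hm1
    rw [hN4] at hlog
    generalize (2 : ℝ) ^ k = N at *
    have hsup : (s : ℝ) ≤ 2 * N ^ 11 := by
      have h1 : (N + 1) ^ 11 ≤ (1025 / 1024 * N) ^ 11 := by
        gcongr
        linarith
      have h2 : (1025 / 1024 * N) ^ 11 ≤ 2 * N ^ 11 := by
        rw [mul_pow]
        gcongr
        norm_num
      linarith
    have hbig : Real.log m ≤ 10 ^ 6 * N ^ 13 := by
      have h1 : (s : ℝ) * ((2 * (10752 * N ^ 2)) * Real.log 10)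
          ≤ (2 * N ^ 11) * ((2 * (10752 * N ^ 2)) * 3) := by
        gcongr
        exact log_ten_le
      have h2 : (2 * N ^ 11) * ((2 * (10752 * N ^ 2)) * 3) = 129024 * N ^ 13 := by ring
      have h3 : 1 ≤ N ^ 13 := one_le_pow₀ (by linarith)
      have := log_ten_le
      linarith
    have hf := final_ineq (by linarith) hL0 hbig
    have hNf' : (s : ℝ) ≤ Nf m := by exact_mod_cast hNf
    linarith
end
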